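/- arXiv:1407.5256 — 2 statements merged into one kernel-verified Lean document; each statement's English description precedes it below -/
import Mathlib

section
/- Let R be a (not necessarily commutative) ring and let f(t) be a monic polynomial in R[t] all of whose coefficients lie in the center of R. If M is a left R[t]-module which is annihilated by f(t) (i.e. f(t)·m = 0 for all m in M) and which has projective dimension at most 1 as an R[t]-module, then M is projective as an R-module. -/
open Polynomial in
/-- `f` commutes with everything when its coefficients are central. -/
theorem central_poly_comm {R : Type*} [Ring R] (f : R[X])
    (hc : ∀ n : ℕ, f.coeff n ∈ Subring.center R) (q : R[X]) : q * f = f * q := by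
  ext n
  rw [coeff_mul, coeff_mul, ← Finset.Nat.sum_antidiagonal_swap]
  refine Finset.sum_congr rfl fun x _ => ?_
  exact (Subring.mem_center_iff.1 (hc _) _)

open Polynomial in
/-- Division by a central monic polynomial is `R`-linear. -/
theorem exists_div_linear {R : Type*} [Ring R] (f : R[X]) (hm : f.Monic)
    (hc : ∀ n : ℕ, f.coeff n ∈ Subring.center R) :
    ∃ r : R[X] →ₗ[R] R[X], ∀ q, r (f * q) = q := by
  nontriviality R
  refine ⟨{ toFun := fun q => q /ₘ f, map_add' := ?_, map_smul' := ?_ },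
    fun q => mul_divByMonic_cancel_left q hm⟩
  · intro a b
    refine (div_modByMonic_unique (a /ₘ f + b /ₘ f) (a %ₘ f + b %ₘ f) hm ⟨?_, ?_⟩).1
    · conv_rhs => rw [← modByMonic_add_div a f, ← modByMonic_add_div b f]
      rw [mul_add]; abel
    · exact (degree_add_le _ _).trans_lt
        (max_lt (degree_modByMonic_lt _ hm) (degree_modByMonic_lt _ hm))
  · intro c a
    refine (div_modByMonic_unique (c • (a /ₘ f)) (c • (a %ₘ f)) hm ⟨?_, ?_⟩).1
    · conv_rhs => rw [← modByMonic_add_div a f]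
      rw [smul_add, smul_eq_C_mul (a := c) (p := a /ₘ f), ← mul_assoc,
        ← central_poly_comm f hc (C c), mul_assoc, ← smul_eq_C_mul]
    · exact (degree_smul_le _ _).trans_lt (degree_modByMonic_lt _ hm)

open Polynomial in
/-- On a projective `R[X]`-module, multiplication by `f` has an `R`-linear left inverse, and the
module is projective over `R`. -/
theorem exists_div_linear_projective {R : Type*} [Ring R] (f : R[X]) (hm : f.Monic)
    (hc : ∀ n : ℕ, f.coeff n ∈ Subring.center R)
    (P : Type*) [AddCommGroup P] [Module R[X] P] [Module R P] [IsScalarTower R R[X] P]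
    (hP : Module.Projective R[X] P) :
    Module.Projective R P ∧ ∃ r : P →ₗ[R] P, ∀ x, r (f • x) = x := by
  obtain ⟨d, hd⟩ := exists_div_linear f hm hc
  obtain ⟨s, hs⟩ := hP.out
  let π : (P →₀ R[X]) →ₗ[R[X]] P := Finsupp.linearCombination R[X] id
  have hs' : ∀ x, π (s x) = x := hs
  haveI : Module.Free R R[X] := Module.Free.of_basis (basisMonomials R)
  constructor
  · exact Module.Projective.of_split (s.restrictScalars R) (π.restrictScalars R)
      (LinearMap.ext hs')
  · refine ⟨(π.restrictScalars R) ∘ₗ (Finsupp.mapRange.linearMap d) ∘ₗ (s.restrictScalars R),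
      fun x => ?_⟩
    have : Finsupp.mapRange.linearMap d (s (f • x)) = s x := by
      ext1 y
      simp [hd]
    change π (Finsupp.mapRange.linearMap d (s (f • x))) = x
    rw [this, hs']

/-- Let `R` be a (not necessarily commutative) ring and `f` a monic polynomial in `R[t]`
all of whose coefficients are central in `R`.  If `M` is a left `R[t]`-module annihilated
by `f` and of projective dimension at most `1` over `R[t]` (witnessed by a short exact
sequence `0 → P₁ → P₀ → M → 0` with `P₀`, `P₁` projective `R[t]`-modules), then `M` is
projective as an `R`-module (via restriction along `R → R[t]`). -/
theorem annihilated_of_projdim_le_one_is_projective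
    (R : Type*) [Ring R] (f : Polynomial R) (hmonic : f.Monic)
    (hcentral : ∀ n : ℕ, f.coeff n ∈ Subring.center R)
    (M : Type*) [AddCommGroup M] [Module (Polynomial R) M]
    (hann : ∀ m : M, f • m = 0)
    (P₀ P₁ : Type*) [AddCommGroup P₀] [Module (Polynomial R) P₀]
    [AddCommGroup P₁] [Module (Polynomial R) P₁]
    (hP₀ : Module.Projective (Polynomial R) P₀)
    (hP₁ : Module.Projective (Polynomial R) P₁)
    (ι : P₁ →ₗ[Polynomial R] P₀) (p : P₀ →ₗ[Polynomial R] M)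
    (hι : Function.Injective ι) (hp : Function.Surjective p)
    (hexact : LinearMap.range ι = LinearMap.ker p) :
    letI : Module R M := Module.compHom M (Polynomial.C : R →+* Polynomial R)
    Module.Projective R M := by
  letI : Module R M := Module.compHom M (Polynomial.C : R →+* Polynomial R)
  letI : Module R P₀ := Module.compHom P₀ (Polynomial.C : R →+* Polynomial R)
  letI : Module R P₁ := Module.compHom P₁ (Polynomial.C : R →+* Polynomial R)
  haveI : IsScalarTower R (Polynomial R) M := ⟨fun c q x => by
    rw [Polynomial.smul_eq_C_mul, mul_smul]; rfl⟩
  haveI : IsScalarTower R (Polynomial R) P₀ := ⟨fun c q x => by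
    rw [Polynomial.smul_eq_C_mul, mul_smul]; rfl⟩
  haveI : IsScalarTower R (Polynomial R) P₁ := ⟨fun c q x => by
    rw [Polynomial.smul_eq_C_mul, mul_smul]; rfl⟩
  change Module.Projective R M
  obtain ⟨-, r₀, hr₀⟩ := exists_div_linear_projective f hmonic hcentral P₀ hP₀
  obtain ⟨hproj, r₁, hr₁⟩ := exists_div_linear_projective f hmonic hcentral P₁ hP₁
  have hfs : ∀ (c : R) (x : P₁), f • (c • x) = c • (f • x) := fun c x => by
    change f • (Polynomial.C c • x) = Polynomial.C c • (f • x)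
    rw [smul_smul, smul_smul, central_poly_comm f hcentral]
  have hfs₀ : ∀ (c : R) (x : P₀), f • (c • x) = c • (f • x) := fun c x => by
    change f • (Polynomial.C c • x) = Polynomial.C c • (f • x)
    rw [smul_smul, smul_smul, central_poly_comm f hcentral]
  have hιC : ∀ (c : R) (x : P₁), ι (c • x) = c • ι x := fun c x =>
    ι.map_smul (Polynomial.C c) x
  have hpC : ∀ (c : R) (x : P₀), p (c • x) = c • p x := fun c x =>
    p.map_smul (Polynomial.C c) x
  have hpι : ∀ y, p (ι y) = 0 := fun y => by
    have : ι y ∈ LinearMap.ker p := hexact ▸ LinearMap.mem_range_self ι y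
    exact this
  have hker : ∀ x, p x = 0 → ∃ y, ι y = x := fun x hx => by
    have : x ∈ LinearMap.range ι := hexact ▸ (LinearMap.mem_ker.2 hx)
    exact this
  have hex : ∀ x : P₀, ∃ y : P₁, ι y = f • x := fun x =>
    hker _ (by rw [map_smul, hann])
  choose g hg using hex
  have hgadd : ∀ x y, g (x + y) = g x + g y := fun x y => hι (by
    rw [map_add, hg, hg, hg, smul_add])
  have hgsmul : ∀ (c : R) x, g (c • x) = c • g x := fun c x => hι (by
    rw [hιC, hg, hg, hfs₀])
  let h : P₀ →ₗ[R] P₁ :=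
    { toFun := fun x => g x - f • r₁ (g x)
      map_add' := fun x y => by
        rw [hgadd, map_add, smul_add]; abel
      map_smul' := fun c x => by
        rw [hgsmul, map_smul, hfs, ← smul_sub]; rfl }
  have hh : ∀ x, h x = g x - f • r₁ (g x) := fun x => rfl
  have hh0 : ∀ x, p x = 0 → h x = 0 := fun x hx => by
    obtain ⟨y, rfl⟩ := hker x hx
    have : g (ι y) = f • y := hι (by rw [hg, map_smul])
    rw [hh, this, hr₁, sub_self]
  have hwd : ∀ x y, p x = p y → h x = h y := fun x y hxy => by
    rw [← sub_eq_zero, ← map_sub]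
    exact hh0 _ (by rw [map_sub, hxy, sub_self])
  choose s hs using hp
  let a : M →ₗ[R] P₁ :=
    { toFun := fun m => h (s m)
      map_add' := fun x y => by
        rw [← map_add]
        exact hwd _ _ (by rw [map_add, hs, hs, hs])
      map_smul' := fun c x => by
        rw [RingHom.id_apply, ← map_smul]
        exact hwd _ _ (by rw [hpC, hs, hs]) }
  let b : P₁ →ₗ[R] M := p.restrictScalars R ∘ₗ r₀ ∘ₗ ι.restrictScalars R
  refine Module.Projective.of_split a b (LinearMap.ext fun m => ?_)
  change p (r₀ (ι (g (s m) - f • r₁ (g (s m))))) = m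
  rw [map_sub, hg, map_smul, map_sub, hr₀, hr₀, map_sub, hs, hpι, sub_zero]
end

section
/- K_0 = R(β+α_i) e(β,α_i) ⊗_{R(β)} R^Λ(β) and K_1 = R(β+α_i) e(α_i,β) ⊗_{R(β)} R^Λ(β) are finitely generated projective as right modules over R^Λ(β) ⊗_k k[t_i]. -/
/- ## Scaffold: Khovanov–Lauda–Rouquier algebras -/

open scoped TensorProduct

/-- A symmetrizable Cartan datum together with the structure constants of the
family of polynomials `Q`. -/
structure CartanDatum (k : Type) [Field k] (I : Type) [Fintype I] [DecidableEq I] : Type where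
  a : I → I → ℤ
  d : I → ℤ
  t : I → I → ℕ → ℕ → k
  a_diag : ∀ i, a i i = 2
  a_nonpos : ∀ i j, i ≠ j → a i j ≤ 0
  a_zero_iff : ∀ i j, a i j = 0 ↔ a j i = 0
  d_pos : ∀ i, 0 < d i
  symmetrize : ∀ i j, d i * a i j = d j * a j i
  t_symm : ∀ i j p q, t i j p q = t j i q p
  t_lead : ∀ i j, i ≠ j → t i j (-(a i j)).toNat 0 ≠ 0

namespace KLR

variable {k : Type} [Field k] {I : Type} [Fintype I] [DecidableEq I]

/-- The symmetric bilinear form `(α_i, α_j) = d_i a_{ij}`. -/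
def B (C : CartanDatum k I) (i j : I) : ℤ := C.d i * C.a i j

/-- Generators of the KLR algebra `R(n)`. -/
inductive Gen (I : Type) (n : ℕ) : Type
  | e (ν : Fin n → I) : Gen I n
  | x (a : Fin n) : Gen I n
  | tau (l : ℕ) (h : l + 1 < n) : Gen I n

variable (k) in
/-- The free algebra on the generators. -/
abbrev FA (I : Type) (n : ℕ) : Type := FreeAlgebra k (Gen I n)

variable (k) in
def ge {n : ℕ} (ν : Fin n → I) : FA k I n := FreeAlgebra.ι k (Gen.e ν)

variable (k) in
def gx {n : ℕ} (a : Fin n) : FA k I n := FreeAlgebra.ι k (Gen.x a)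

variable (k) in
def gt {n : ℕ} (l : ℕ) (h : l + 1 < n) : FA k I n := FreeAlgebra.ι k (Gen.tau l h)

/-- The polynomial `Q_{ij}(u,v)` evaluated on two elements of an algebra. -/
def Qel (C : CartanDatum k I) {A : Type} [Ring A] [Algebra k A] (i j : I) (u v : A) : A :=
  if i = j then 0 else
    ∑ p ∈ Finset.range ((-(C.a i j)).toNat + 1), ∑ q ∈ Finset.range ((-(C.a j i)).toNat + 1),
      if C.d i * (p : ℤ) + C.d j * (q : ℤ) = -(C.d i * C.a i j) then
        C.t i j p q • (u ^ p * v ^ q) else 0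

/-- The divided difference `(Q_{ij}(u,v) - Q_{ij}(w,v))/(u - w)` evaluated on elements. -/
def Qdiff (C : CartanDatum k I) {A : Type} [Ring A] [Algebra k A] (i j : I) (u v w : A) : A :=
  if i = j then 0 else
    ∑ p ∈ Finset.range ((-(C.a i j)).toNat + 1), ∑ q ∈ Finset.range ((-(C.a j i)).toNat + 1),
      if C.d i * (p : ℤ) + C.d j * (q : ℤ) = -(C.d i * C.a i j) then
        C.t i j p q • ((∑ c ∈ Finset.range p, u ^ c * w ^ (p - 1 - c)) * v ^ q) else 0

/-- The defining relations of the KLR algebra `R(n)`. -/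
inductive Rel (C : CartanDatum k I) (n : ℕ) : FA k I n → FA k I n → Prop
  | ee : ∀ ν ν' : Fin n → I, Rel C n (ge k ν * ge k ν') (if ν = ν' then ge k ν else 0)
  | esum : Rel C n (∑ ν : Fin n → I, ge k ν) 1
  | xx : ∀ a b : Fin n, Rel C n (gx k a * gx k b) (gx k b * gx k a)
  | xe : ∀ (a : Fin n) (ν : Fin n → I), Rel C n (gx k a * ge k ν) (ge k ν * gx k a)
  | taue : ∀ (l : ℕ) (h : l + 1 < n) (ν : Fin n → I),
      Rel C n (gt k l h * ge k ν)
        (ge k (ν ∘ Equiv.swap (⟨l, Nat.lt_of_succ_lt h⟩ : Fin n) ⟨l + 1, h⟩) * gt k l h)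
  | tautau : ∀ (l : ℕ) (h : l + 1 < n) (l' : ℕ) (h' : l' + 1 < n),
      (l + 1 < l' ∨ l' + 1 < l) →
      Rel C n (gt k l h * gt k l' h') (gt k l' h' * gt k l h)
  | tausq : ∀ (l : ℕ) (h : l + 1 < n) (ν : Fin n → I),
      Rel C n (gt k l h ^ 2 * ge k ν)
        (Qel C (ν ⟨l, Nat.lt_of_succ_lt h⟩) (ν ⟨l + 1, h⟩)
          (gx k ⟨l, Nat.lt_of_succ_lt h⟩) (gx k ⟨l + 1, h⟩) * ge k ν)
  | taux : ∀ (l : ℕ) (h : l + 1 < n) (m : Fin n) (ν : Fin n → I),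
      Rel C n ((gt k l h * gx k m
          - gx k (Equiv.swap (⟨l, Nat.lt_of_succ_lt h⟩ : Fin n) ⟨l + 1, h⟩ m) * gt k l h) * ge k ν)
        (if m = ⟨l, Nat.lt_of_succ_lt h⟩ ∧ ν ⟨l, Nat.lt_of_succ_lt h⟩ = ν ⟨l + 1, h⟩ then
            -(ge k ν)
          else if m = (⟨l + 1, h⟩ : Fin n) ∧ ν ⟨l, Nat.lt_of_succ_lt h⟩ = ν ⟨l + 1, h⟩ then
            ge k ν
          else 0)
  | braid : ∀ (l : ℕ) (h2 : l + 2 < n) (ν : Fin n → I),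
      Rel C n ((gt k (l + 1) h2 * gt k l (Nat.lt_of_succ_lt h2) * gt k (l + 1) h2
          - gt k l (Nat.lt_of_succ_lt h2) * gt k (l + 1) h2 * gt k l (Nat.lt_of_succ_lt h2))
          * ge k ν)
        (if ν ⟨l, Nat.lt_of_succ_lt (Nat.lt_of_succ_lt h2)⟩ = ν ⟨l + 2, h2⟩ then
            Qdiff C (ν ⟨l, Nat.lt_of_succ_lt (Nat.lt_of_succ_lt h2)⟩)
              (ν ⟨l + 1, Nat.lt_of_succ_lt h2⟩)
              (gx k ⟨l, Nat.lt_of_succ_lt (Nat.lt_of_succ_lt h2)⟩)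
              (gx k ⟨l + 1, Nat.lt_of_succ_lt h2⟩)
              (gx k ⟨l + 2, h2⟩) * ge k ν
          else 0)

/-- The Khovanov–Lauda–Rouquier algebra `R(n)`. -/
abbrev Alg (C : CartanDatum k I) (n : ℕ) : Type := RingQuot (Rel C n)

variable (C : CartanDatum k I)

/-- The generator `e(ν)` of `R(n)`. -/
noncomputable def Ee {n : ℕ} (ν : Fin n → I) : Alg C n :=
  RingQuot.mkAlgHom k (Rel C n) (ge k ν)

/-- The generator `x_a` of `R(n)`. -/
noncomputable def Xx {n : ℕ} (a : Fin n) : Alg C n :=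
  RingQuot.mkAlgHom k (Rel C n) (gx k a)

/-- The generator `τ_l` of `R(n)`. -/
noncomputable def Tt {n : ℕ} (l : ℕ) (h : l + 1 < n) : Alg C n :=
  RingQuot.mkAlgHom k (Rel C n) (gt k l h)

variable (I) in
/-- The height of `β = Σ k_i α_i`. -/
def ht (β : I → ℕ) : ℕ := ∑ i, β i

/-- The content of a sequence `ν`. -/
def content {m : ℕ} (ν : Fin m → I) : I → ℕ :=
  fun i => (Finset.univ.filter (fun a => ν a = i)).card

/-- The set `I^β` of sequences of length `m` with content `β`. -/
def seqs (β : I → ℕ) (m : ℕ) : Finset (Fin m → I) :=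
  Finset.univ.filter (fun ν => content ν = β)

/-- The central idempotent `e(β)` in `R(n)`. -/
noncomputable def eIdem (n : ℕ) (β : I → ℕ) : Alg C n := ∑ ν ∈ seqs β n, Ee C ν

/-- `β + α_i`. -/
def addA (β : I → ℕ) (i : I) : I → ℕ := fun j => β j + if j = i then 1 else 0

/-- The idempotent `e(β, α_i)` of `R(n+1)` (sum over `ν ∈ I^{β+α_i}` with `ν_{n+1} = i`). -/
noncomputable def eR (n : ℕ) (β : I → ℕ) (i : I) : Alg C (n + 1) :=
  ∑ ν ∈ (seqs (addA β i) (n + 1)).filter (fun ν => ν (Fin.last n) = i), Ee C ν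

/-- The idempotent `e(α_i, β)` of `R(n+1)` (sum over `ν ∈ I^{β+α_i}` with `ν_1 = i`). -/
noncomputable def eL (n : ℕ) (β : I → ℕ) (i : I) : Alg C (n + 1) :=
  ∑ ν ∈ (seqs (addA β i) (n + 1)).filter (fun ν => ν 0 = i), Ee C ν

/-- The idempotent `e(β - α_i, α_i)` of `R(n)`: sum over `ν ∈ I^β` with last entry `i`;
this is `0` when the coefficient of `α_i` in `β` is `0` or `n = 0`. -/
noncomputable def eD (n : ℕ) (β : I → ℕ) (i : I) : Alg C n :=
  ∑ ν ∈ (seqs β n).filter (fun ν => if h : 0 < n then ν ⟨n - 1, Nat.sub_lt h one_pos⟩ = i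
      else False), Ee C ν

/-- The relations defining `R(β) = R(n)e(β)` (a unital ring with unit the image of
`e(β)`): the KLR relations together with the relation `e(β) = 1`. -/
inductive URel (n : ℕ) (β : I → ℕ) : FA k I n → FA k I n → Prop
  | base : ∀ {x y : FA k I n}, Rel C n x y → URel n β x y
  | unit : URel n β (∑ ν ∈ seqs β n, ge k ν) 1

/-- The algebra `R(β)`, realized as the quotient of `R(n)` identifying `e(β)` with `1`. -/
abbrev bAlg (n : ℕ) (β : I → ℕ) : Type := RingQuot (URel C n β)

/-- The canonical projection `R(n) → R(β)`. -/
noncomputable def toB {n : ℕ} {β : I → ℕ} : Alg C n →ₐ[k] bAlg C n β :=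
  RingQuot.liftAlgHom (S := k)
    ⟨RingQuot.mkAlgHom k (URel C n β),
      fun _ _ h => RingQuot.mkAlgHom_rel k (URel.base h)⟩

/-- The element `a^Λ(x_1)` at the level of the free algebra. -/
noncomputable def aLamF (Λ : I → ℕ) (n : ℕ) (β : I → ℕ) : FA k I n :=
  if h : 0 < n then
    ∑ ν ∈ seqs β n, (gx k (⟨0, h⟩ : Fin n)) ^ (Λ (ν ⟨0, h⟩)) * ge k ν
  else 0

/-- The element `a^Λ(x_1)` of `R(β)`. -/
noncomputable def aLam (Λ : I → ℕ) (n : ℕ) (β : I → ℕ) : bAlg C n β :=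
  RingQuot.mkAlgHom k (URel C n β) (aLamF Λ n β)

/-- The relations defining the cyclotomic quotient `R^Λ(β)`. -/
inductive CRel (Λ : I → ℕ) (n : ℕ) (β : I → ℕ) : FA k I n → FA k I n → Prop
  | base : ∀ {x y : FA k I n}, Rel C n x y → CRel Λ n β x y
  | unit : CRel Λ n β (∑ ν ∈ seqs β n, ge k ν) 1
  | cyc : CRel Λ n β (aLamF Λ n β) 0

/-- The cyclotomic KLR algebra `R^Λ(β)`. -/
abbrev cAlg (Λ : I → ℕ) (n : ℕ) (β : I → ℕ) : Type := RingQuot (CRel C Λ n β)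

/-- The canonical projection `R(β) → R^Λ(β)`. -/
noncomputable def toC {Λ : I → ℕ} {n : ℕ} {β : I → ℕ} : bAlg C n β →ₐ[k] cAlg C Λ n β :=
  RingQuot.liftAlgHom (S := k)
    ⟨RingQuot.mkAlgHom k (CRel C Λ n β),
      fun _ _ h => by
        cases h with
        | base hb => exact RingQuot.mkAlgHom_rel k (CRel.base hb)
        | unit => exact RingQuot.mkAlgHom_rel k CRel.unit⟩

/-- The canonical projection `R(n) → R^Λ(β)`. -/
noncomputable def toCB (Λ : I → ℕ) {n : ℕ} {β : I → ℕ} : Alg C n →ₐ[k] cAlg C Λ n β :=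
  (toC C).comp (toB C)

end KLR
namespace KLR

variable {k : Type} [Field k] {I : Type} [Fintype I] [DecidableEq I] (C : CartanDatum k I)

section Homs

/-- Characterization of the non-unital algebra homomorphism `R(n) → R(n+1)` adding `i`
on the right: `e(ν) ↦ e(ν∗(i))`, `x_a ↦ x_a e(…,α_i)`, `τ_l ↦ τ_l e(…,α_i)`,
where the relevant idempotent is supplied as `e`. -/
def IsUpR {n : ℕ} (i : I) (e : Alg C (n + 1)) (φ : Alg C n →ₙₐ[k] Alg C (n + 1)) : Prop :=
  (∀ ν : Fin n → I, φ (Ee C ν) = Ee C (Fin.snoc ν i)) ∧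
  (∀ a : Fin n, φ (Xx C a) = Xx C a.castSucc * e) ∧
  (∀ (l : ℕ) (h : l + 1 < n), φ (Tt C l h) = Tt C l (Nat.lt_succ_of_lt h) * e)

/-- Characterization of the non-unital algebra homomorphism `R(n) → R(n+1)` adding `i`
on the left: `e(ν) ↦ e((i)∗ν)`, `x_a ↦ x_{a+1} e(α_i,…)`, `τ_l ↦ τ_{l+1} e(α_i,…)`. -/
def IsUpL {n : ℕ} (i : I) (e : Alg C (n + 1)) (φ : Alg C n →ₙₐ[k] Alg C (n + 1)) : Prop :=
  (∀ ν : Fin n → I, φ (Ee C ν) = Ee C (Fin.cons i ν)) ∧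
  (∀ a : Fin n, φ (Xx C a) = Xx C a.succ * e) ∧
  (∀ (l : ℕ) (h : l + 1 < n), φ (Tt C l h) = Tt C (l + 1) (Nat.succ_lt_succ h) * e)

/-- Characterization of the non-unital homomorphism `R(β) → R(β+α_i)` (right version). -/
def IsUpRb {n : ℕ} {β γ' : I → ℕ} (i : I)
    (φ : bAlg C n β →ₙₐ[k] bAlg C (n + 1) γ') : Prop :=
  (∀ ν : Fin n → I, φ (toB C (Ee C ν)) = toB C (Ee C (Fin.snoc ν i))) ∧
  (∀ a : Fin n, φ (toB C (Xx C a)) = toB C (Xx C a.castSucc * eR C n β i)) ∧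
  (∀ (l : ℕ) (h : l + 1 < n),
    φ (toB C (Tt C l h)) = toB C (Tt C l (Nat.lt_succ_of_lt h) * eR C n β i))

/-- Characterization of the non-unital homomorphism `R(β) → R(β+α_i)` (left version). -/
def IsUpLb {n : ℕ} {β γ' : I → ℕ} (i : I)
    (φ : bAlg C n β →ₙₐ[k] bAlg C (n + 1) γ') : Prop :=
  (∀ ν : Fin n → I, φ (toB C (Ee C ν)) = toB C (Ee C (Fin.cons i ν))) ∧
  (∀ a : Fin n, φ (toB C (Xx C a)) = toB C (Xx C a.succ * eL C n β i)) ∧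
  (∀ (l : ℕ) (h : l + 1 < n),
    φ (toB C (Tt C l h)) = toB C (Tt C (l + 1) (Nat.succ_lt_succ h) * eL C n β i))

/-- Characterization of the non-unital homomorphism `R^Λ(β) → R^Λ(β+α_i)` (right version). -/
def IsUpRc (Λ : I → ℕ) {n : ℕ} {β γ' : I → ℕ} (i : I)
    (φ : cAlg C Λ n β →ₙₐ[k] cAlg C Λ (n + 1) γ') : Prop :=
  (∀ ν : Fin n → I, φ (toCB C Λ (Ee C ν)) = toCB C Λ (Ee C (Fin.snoc ν i))) ∧
  (∀ a : Fin n, φ (toCB C Λ (Xx C a)) = toCB C Λ (Xx C a.castSucc * eR C n β i)) ∧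
  (∀ (l : ℕ) (h : l + 1 < n),
    φ (toCB C Λ (Tt C l h)) = toCB C Λ (Tt C l (Nat.lt_succ_of_lt h) * eR C n β i))

end Homs

section Tensor

open scoped TensorProduct

variable (S B M : Type) [Ring S] [Algebra k S] [Ring B] [Algebra k B]
  [AddCommGroup M] [Module k M] [Module S M] [IsScalarTower k S M]

variable (k) in
/-- The relation submodule defining the balanced tensor product `B ⊗_S M` where `S`
acts on `B` on the right through the (non-unital) homomorphism `φ : S → B`. -/
def TRel (φ : S →ₙₐ[k] B) : Submodule B (B ⊗[k] M) :=
  Submodule.span B {z | ∃ (b : B) (r : S) (m : M), z = (b * φ r) ⊗ₜ[k] m - b ⊗ₜ[k] (r • m)}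

variable (k) in
/-- The balanced tensor product `B ⊗_S M` (over the homomorphism `φ : S → B`). -/
abbrev OT (φ : S →ₙₐ[k] B) : Type := (B ⊗[k] M) ⧸ TRel k S B M φ

variable (k) in
/-- The canonical projection onto the balanced tensor product. -/
def OTmk (φ : S →ₙₐ[k] B) (z : B ⊗[k] M) : OT k S B M φ := Submodule.Quotient.mk z

end Tensor

section ESub

variable (A : Type) [Ring A] [Algebra k A] (N : Type) [AddCommGroup N] [Module k N]
  [Module A N] [IsScalarTower k A N]

variable (k) in
/-- Multiplication by `e` as a `k`-linear endomorphism of an `A`-module. -/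
def eMap (e : A) : N →ₗ[k] N where
  toFun x := e • x
  map_add' x y := smul_add e x y
  map_smul' c x := by
    simp only [RingHom.id_apply]
    rw [← algebraMap_smul A c x, ← mul_smul, ← Algebra.commutes, mul_smul, algebraMap_smul]

variable (k) in
/-- The `k`-submodule `eN` of an `A`-module `N`. -/
def eSub (e : A) : Submodule k N := LinearMap.range (eMap k A N e)

end ESub

section Grading

variable {A M : Type}

variable (k) in
/-- `𝒜` is an algebra grading of `A`. -/
def IsAlgGrading [Ring A] [Algebra k A] (𝒜 : ℤ → Submodule k A) : Prop :=
  (1 : A) ∈ 𝒜 0 ∧ (∀ {c₁ c₂ : ℤ} {a b : A}, a ∈ 𝒜 c₁ → b ∈ 𝒜 c₂ → a * b ∈ 𝒜 (c₁ + c₂)) ∧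
    DirectSum.IsInternal 𝒜

variable (k) in
/-- `gr` is a grading of the `A`-module `M` compatible with the algebra grading `𝒜`. -/
def IsModGrading [Ring A] [Algebra k A] [AddCommGroup M] [Module k M] [Module A M]
    (𝒜 : ℤ → Submodule k A) (gr : ℤ → Submodule k M) : Prop :=
  DirectSum.IsInternal gr ∧
    ∀ {c m : ℤ} {a : A} {x : M}, a ∈ 𝒜 c → x ∈ gr m → a • x ∈ gr (c + m)

end Grading

section KLRGrading

/-- The canonical grading property for `R(n)`-type quotients: images of `e(ν)` have degree 0,
`x_a e(ν)` has degree `(α_{ν_a}, α_{ν_a})`, and `τ_l e(ν)` has degree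
`-(α_{ν_l}, α_{ν_{l+1}})`.  Here `p : R(n) → A` is the canonical projection onto the
quotient under consideration. -/
def IsKLRGrading {n : ℕ} {A : Type} [Ring A] [Algebra k A] (p : Alg C n →ₐ[k] A)
    (𝒜 : ℤ → Submodule k A) : Prop :=
  IsAlgGrading k 𝒜 ∧
  (∀ ν : Fin n → I, p (Ee C ν) ∈ 𝒜 0) ∧
  (∀ (a : Fin n) (ν : Fin n → I), p (Xx C a * Ee C ν) ∈ 𝒜 (B C (ν a) (ν a))) ∧
  (∀ (l : ℕ) (h : l + 1 < n) (ν : Fin n → I),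
    p (Tt C l h * Ee C ν) ∈ 𝒜 (-(B C (ν ⟨l, Nat.lt_of_succ_lt h⟩) (ν ⟨l + 1, h⟩))))

end KLRGrading

end KLR
namespace KLR

open scoped TensorProduct

variable {k : Type} [Field k] {I : Type} [Fintype I] [DecidableEq I] (C : CartanDatum k I)

section IndGrading

variable (S B M : Type) [Ring S] [Algebra k S] [Ring B] [Algebra k B]
  [AddCommGroup M] [Module k M] [Module S M] [IsScalarTower k S M]

variable (k) in
/-- The induced grading on the balanced tensor product `B ⊗_S M`. -/
def otGr (φ : S →ₙₐ[k] B) (𝒜 : ℤ → Submodule k B) (gr : ℤ → Submodule k M)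
    (c : ℤ) : Submodule k (OT k S B M φ) :=
  Submodule.span k {z | ∃ (c₁ c₂ : ℤ) (b : B) (m : M),
    c₁ + c₂ = c ∧ b ∈ 𝒜 c₁ ∧ m ∈ gr c₂ ∧ z = OTmk k S B M φ (b ⊗ₜ[k] m)}

end IndGrading

section ESubGrading

variable (A N : Type) [Ring A] [Algebra k A] [AddCommGroup N] [Module k N]
  [Module A N] [IsScalarTower k A N]

variable (k) in
/-- The induced grading on the submodule `eN ⊆ N`. -/
def eSubGr (e : A) (gr : ℤ → Submodule k N) (c : ℤ) : Submodule k ↥(eSub k A N e) :=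
  (gr c).comap (eSub k A N e).subtype

end ESubGrading

section Instances

variable (n : ℕ) (β : I → ℕ) (Λ : I → ℕ)

noncomputable instance : Module (bAlg C n β) (cAlg C Λ n β) :=
  Module.compHom _ (toC C (Λ := Λ) (n := n) (β := β)).toRingHom

instance : IsScalarTower k (bAlg C n β) (cAlg C Λ n β) := by
  constructor
  intro c s m
  show (toC C (c • s)) * m = c • (toC C s * m)
  rw [map_smul, Algebra.smul_mul_assoc]

end Instances


end KLR
namespace KLR

open scoped TensorProduct

variable {k : Type} [Field k] {I : Type} [Fintype I] [DecidableEq I] (C : CartanDatum k I)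

/-- `⟨h_i, β⟩ = Σ_j k_j a_{ij}`. -/
def pairH (i : I) (β : I → ℕ) : ℤ := ∑ j, (β j : ℤ) * C.a i j

/-- `(α_i, β) = Σ_j k_j (α_i, α_j)`. -/
def pairB (i : I) (β : I → ℕ) : ℤ := ∑ j, (β j : ℤ) * B C i j

/-- The ordered product `τ_1 τ_2 ⋯ τ_n` in `R(β+α_i)`-type quotients. -/
noncomputable def tauProd (n : ℕ) (γ : I → ℕ) : bAlg C (n + 1) γ :=
  (List.ofFn (fun l : Fin n => toB C (Tt C l.val (Nat.succ_lt_succ l.isLt)))).prod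

/-- The right ideal `Ae` as a `k`-submodule. -/
noncomputable def rId {A : Type} [Ring A] [Algebra k A] (e : A) : Submodule k A :=
  LinearMap.range (LinearMap.mulRight k e)

/-- The left ideal `eA` as a `k`-submodule. -/
noncomputable def lId {A : Type} [Ring A] [Algebra k A] (e : A) : Submodule k A :=
  LinearMap.range (LinearMap.mulLeft k e)

variable (k) in
/-- Characterization of the module structure on `eN` over `S'` acting through
the (non-unital) homomorphism `φ : S' → A`. -/
def IsEAction {A N S' : Type} [Ring A] [Algebra k A] [AddCommGroup N] [Module k N]
    [Module A N] [IsScalarTower k A N] [Ring S'] [Algebra k S']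
    (e : A) (φ : S' →ₙₐ[k] A) (inst : Module S' ↥(eSub k A N e)) : Prop :=
  letI := inst
  ∀ (r : S') (x : ↥(eSub k A N e)), ((r • x : ↥(eSub k A N e)) : N) = φ r • (x : N)

end KLR

namespace KLR

variable {k : Type} [Field k] {I : Type} [Fintype I] [DecidableEq I] (C : CartanDatum k I)

/-- The image of `e(β,α_i)` in `R(β+α_i)`. -/
noncomputable def eRb (n : ℕ) (β : I → ℕ) (i : I) : bAlg C (n + 1) (addA β i) :=
  toB C (eR C n β i)

/-- The image of `e(α_i,β)` in `R(β+α_i)`. -/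
noncomputable def eLb (n : ℕ) (β : I → ℕ) (i : I) : bAlg C (n + 1) (addA β i) :=
  toB C (eL C n β i)

/-- The image of `e(β-α_i,α_i)` in `R(β)`. -/
noncomputable def eDb (n : ℕ) (β : I → ℕ) (i : I) : bAlg C n β :=
  toB C (eD C n β i)

/-- The image of `e(β,α_i)` in `R^Λ(β+α_i)`. -/
noncomputable def eRc (Λ : I → ℕ) (n : ℕ) (β : I → ℕ) (i : I) :
    cAlg C Λ (n + 1) (addA β i) :=
  toCB C Λ (eR C n β i)

/-- The image of `e(β-α_i,α_i)` in `R^Λ(β)`. -/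
noncomputable def eDc (Λ : I → ℕ) (n : ℕ) (β : I → ℕ) (i : I) : cAlg C Λ n β :=
  toCB C Λ (eD C n β i)

end KLR



set_option linter.unusedSectionVars false
set_option linter.style.longLine false

namespace KLR

variable {k : Type} [Field k] {I : Type} [Fintype I] [DecidableEq I] (C : CartanDatum k I)

/-! ### Universal property of the KLR algebra -/

/-- Elements of an algebra satisfying the KLR relations. -/
structure Rels {n : ℕ} {A : Type} [Ring A] [Algebra k A] (e : (Fin n → I) → A) (x : Fin n → A)
    (t : ∀ l : ℕ, l + 1 < n → A) : Prop where
  ee : ∀ ν ν' : Fin n → I, e ν * e ν' = if ν = ν' then e ν else 0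
  esum : ∑ ν : Fin n → I, e ν = 1
  xx : ∀ a b : Fin n, x a * x b = x b * x a
  xe : ∀ (a : Fin n) (ν : Fin n → I), x a * e ν = e ν * x a
  taue : ∀ (l : ℕ) (h : l + 1 < n) (ν : Fin n → I), t l h * e ν =
      e (ν ∘ Equiv.swap (⟨l, Nat.lt_of_succ_lt h⟩ : Fin n) ⟨l + 1, h⟩) * t l h
  tautau : ∀ (l : ℕ) (h : l + 1 < n) (l' : ℕ) (h' : l' + 1 < n),
      (l + 1 < l' ∨ l' + 1 < l) → t l h * t l' h' = t l' h' * t l h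
  tausq : ∀ (l : ℕ) (h : l + 1 < n) (ν : Fin n → I), t l h ^ 2 * e ν =
      Qel C (ν ⟨l, Nat.lt_of_succ_lt h⟩) (ν ⟨l + 1, h⟩)
          (x ⟨l, Nat.lt_of_succ_lt h⟩) (x ⟨l + 1, h⟩) * e ν
  taux : ∀ (l : ℕ) (h : l + 1 < n) (m : Fin n) (ν : Fin n → I),
      (t l h * x m
          - x (Equiv.swap (⟨l, Nat.lt_of_succ_lt h⟩ : Fin n) ⟨l + 1, h⟩ m) * t l h) * e ν =
        (if m = ⟨l, Nat.lt_of_succ_lt h⟩ ∧ ν ⟨l, Nat.lt_of_succ_lt h⟩ = ν ⟨l + 1, h⟩ then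
            -(e ν)
          else if m = (⟨l + 1, h⟩ : Fin n) ∧ ν ⟨l, Nat.lt_of_succ_lt h⟩ = ν ⟨l + 1, h⟩ then
            e ν
          else 0)
  braid : ∀ (l : ℕ) (h2 : l + 2 < n) (ν : Fin n → I),
      (t (l + 1) h2 * t l (Nat.lt_of_succ_lt h2) * t (l + 1) h2
          - t l (Nat.lt_of_succ_lt h2) * t (l + 1) h2 * t l (Nat.lt_of_succ_lt h2)) * e ν =
        (if ν ⟨l, Nat.lt_of_succ_lt (Nat.lt_of_succ_lt h2)⟩ = ν ⟨l + 2, h2⟩ then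
            Qdiff C (ν ⟨l, Nat.lt_of_succ_lt (Nat.lt_of_succ_lt h2)⟩)
              (ν ⟨l + 1, Nat.lt_of_succ_lt h2⟩)
              (x ⟨l, Nat.lt_of_succ_lt (Nat.lt_of_succ_lt h2)⟩)
              (x ⟨l + 1, Nat.lt_of_succ_lt h2⟩)
              (x ⟨l + 2, h2⟩) * e ν
          else 0)

lemma map_Qel {A B : Type} [Ring A] [Algebra k A] [Ring B] [Algebra k B] (f : A →ₐ[k] B)
    (i j : I) (u v : A) : f (Qel C i j u v) = Qel C i j (f u) (f v) := by
  unfold Qel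
  split_ifs with h
  · simp
  · simp only [map_sum]
    refine Finset.sum_congr rfl fun p _ => Finset.sum_congr rfl fun q _ => ?_
    split_ifs <;> simp

lemma map_Qdiff {A B : Type} [Ring A] [Algebra k A] [Ring B] [Algebra k B] (f : A →ₐ[k] B)
    (i j : I) (u v w : A) : f (Qdiff C i j u v w) = Qdiff C i j (f u) (f v) (f w) := by
  unfold Qdiff
  split_ifs with h
  · simp
  · simp only [map_sum]
    refine Finset.sum_congr rfl fun p _ => Finset.sum_congr rfl fun q _ => ?_
    split_ifs <;> simp [map_sum]

section lifts
variable {C}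
variable {n : ℕ} {A : Type} [Ring A] [Algebra k A] {e : (Fin n → I) → A} {x : Fin n → A}
    {t : ∀ l : ℕ, l + 1 < n → A}

/-- The map on generators. -/
def genMap (e : (Fin n → I) → A) (x : Fin n → A)
    (t : ∀ l : ℕ, l + 1 < n → A) : Gen I n → A
  | Gen.e ν => e ν
  | Gen.x a => x a
  | Gen.tau l h => t l h

noncomputable def faLift (e : (Fin n → I) → A) (x : Fin n → A)
    (t : ∀ l : ℕ, l + 1 < n → A) : FA k I n →ₐ[k] A := FreeAlgebra.lift k (genMap e x t)

@[simp] lemma faLift_ge (ν) : faLift (k := k) e x t (ge k ν) = e ν := by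
  simp [faLift, ge, genMap]
@[simp] lemma faLift_gx (a) : faLift (k := k) e x t (gx k a) = x a := by
  simp [faLift, gx, genMap]
@[simp] lemma faLift_gt (l h) : faLift (k := k) e x t (gt k l h) = t l h := by
  simp [faLift, gt, genMap]

lemma Rels.rel (H : Rels C e x t) {y z : FA k I n} (h : Rel C n y z) :
    faLift e x t y = faLift e x t z := by
  cases h with
  | ee ν ν' => simpa [apply_ite] using H.ee ν ν'
  | esum => simpa using H.esum
  | xx a b => simpa using H.xx a b
  | xe a b => simpa using H.xe a b
  | taue l h ν => simpa using H.taue l h ν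
  | tautau l h l' h' hh => simpa using H.tautau l h l' h' hh
  | tausq l h ν => simpa [map_Qel] using H.tausq l h ν
  | taux l h m ν => simpa only [apply_ite (faLift (k := k) e x t), map_mul, map_sub, faLift_ge, faLift_gx, faLift_gt, map_neg, map_zero] using H.taux l h m ν
  | braid l h ν => simpa only [apply_ite (faLift (k := k) e x t), map_mul, map_sub, faLift_ge, faLift_gx, faLift_gt, map_neg, map_zero, map_Qdiff] using H.braid l h ν

/-- Universal property of `R(n)`. -/
noncomputable def algLift (H : Rels C e x t) : Alg C n →ₐ[k] A :=
  RingQuot.liftAlgHom (S := k) ⟨faLift e x t, fun _ _ h => H.rel h⟩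

@[simp] lemma algLift_Ee (H : Rels C e x t) (ν) : algLift H (Ee C ν) = e ν := by
  simp [algLift, Ee]
@[simp] lemma algLift_Xx (H : Rels C e x t) (ν) : algLift H (Xx C ν) = x ν := by
  simp [algLift, Xx]
@[simp] lemma algLift_Tt (H : Rels C e x t) (l h) : algLift H (Tt C l h) = t l h := by
  simp [algLift, Tt]

/-- Universal property of `R(β)`. -/
noncomputable def bLift (H : Rels C e x t) {β : I → ℕ} (hβ : ∑ ν ∈ seqs β n, e ν = 1) :
    bAlg C n β →ₐ[k] A :=
  RingQuot.liftAlgHom (S := k) ⟨faLift e x t, fun _ _ h => by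
    cases h with
    | base h => exact H.rel h
    | unit => simpa using hβ⟩

@[simp] lemma toB_mk {β : I → ℕ} (y : FA k I n) :
    toB C (β := β) (RingQuot.mkAlgHom k (Rel C n) y) = RingQuot.mkAlgHom k (URel C n β) y := by
  simp [toB]

lemma bLift_toB (H : Rels C e x t) {β : I → ℕ} (hβ : ∑ ν ∈ seqs β n, e ν = 1) (y : Alg C n) :
    bLift H hβ (toB C y) = algLift H y := by
  obtain ⟨y, rfl⟩ := RingQuot.mkAlgHom_surjective k _ y
  simp [bLift, algLift]

lemma toB_surjective {β : I → ℕ} : Function.Surjective (toB C (n := n) (β := β)) := by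
  intro z
  obtain ⟨y, rfl⟩ := RingQuot.mkAlgHom_surjective k _ z
  exact ⟨_, toB_mk y⟩

end lifts

/-- `R(n)` satisfies the relations. -/
lemma algRels (n : ℕ) : Rels C (n := n) (Ee C) (Xx C) (Tt C) := by
  constructor
  · intro ν ν'
    have := RingQuot.mkAlgHom_rel k (Rel.ee (C := C) ν ν')
    simpa only [Ee, Xx, Tt, apply_ite (RingQuot.mkAlgHom k (Rel C n)), map_mul, map_zero] using this
  · have := RingQuot.mkAlgHom_rel k (Rel.esum (C := C) (n := n))
    simpa only [Ee, Xx, Tt, map_sum, map_one] using this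
  · intro a b
    have := RingQuot.mkAlgHom_rel k (Rel.xx (C := C) a b)
    simpa only [Ee, Xx, Tt, map_mul] using this
  · intro a b
    have := RingQuot.mkAlgHom_rel k (Rel.xe (C := C) a b)
    simpa only [Ee, Xx, Tt, map_mul] using this
  · intro l h ν
    have := RingQuot.mkAlgHom_rel k (Rel.taue (C := C) l h ν)
    simpa only [Ee, Xx, Tt, map_mul] using this
  · intro l h l' h' hh
    have := RingQuot.mkAlgHom_rel k (Rel.tautau (C := C) l h l' h' hh)
    simpa only [Ee, Xx, Tt, map_mul] using this
  · intro l h ν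
    have := RingQuot.mkAlgHom_rel k (Rel.tausq (C := C) l h ν)
    simpa only [Ee, Xx, Tt, map_mul, map_pow, map_Qel] using this
  · intro l h m ν
    have := RingQuot.mkAlgHom_rel k (Rel.taux (C := C) l h m ν)
    simpa only [Ee, Xx, Tt, apply_ite (RingQuot.mkAlgHom k (Rel C n)), map_mul, map_sub, map_neg, map_zero] using this
  · intro l h ν
    have := RingQuot.mkAlgHom_rel k (Rel.braid (C := C) l h ν)
    simpa only [Ee, Xx, Tt, apply_ite (RingQuot.mkAlgHom k (Rel C n)), map_mul, map_sub, map_neg, map_zero,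
      map_Qdiff] using this

/-- A subalgebra containing all generators is everything. -/
lemma alg_top {n : ℕ} (S : Subalgebra k (Alg C n)) (he : ∀ ν, Ee C ν ∈ S) (hx : ∀ a, Xx C a ∈ S)
    (ht : ∀ l h, Tt C l h ∈ S) (z : Alg C n) : z ∈ S := by
  obtain ⟨y, rfl⟩ := RingQuot.mkAlgHom_surjective k _ z
  induction y using FreeAlgebra.induction with
  | grade0 r => rw [AlgHom.commutes]; exact S.algebraMap_mem r
  | grade1 g =>
    cases g with
    | e ν => exact he ν
    | x a => exact hx a
    | tau l h => exact ht l h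
  | mul a b ha hb => rw [map_mul]; exact S.mul_mem ha hb
  | add a b ha hb => rw [map_add]; exact S.add_mem ha hb

/-- The left stabilizer of a subspace. -/
def lstab {A : Type} [Ring A] [Algebra k A] (N : Submodule k A) : Subalgebra k A where
  carrier := {r | ∀ z ∈ N, r * z ∈ N}
  mul_mem' := fun {a b} ha hb z hz => by rw [mul_assoc]; exact ha _ (hb _ hz)
  add_mem' := fun {a b} ha hb z hz => by rw [add_mul]; exact N.add_mem (ha _ hz) (hb _ hz)
  algebraMap_mem' := fun r z hz => by
    rw [← Algebra.smul_def]; exact N.smul_mem _ hz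

end KLR


namespace KLR

variable {k : Type} [Field k] {I : Type} [Fintype I] [DecidableEq I] (C : CartanDatum k I)

/-! ### The polynomial (rational) representation -/

/-- A field with algebraically independent elements permuted by field automorphisms. -/
structure VarField (k K : Type) [Field k] [Field K] [Algebra k K] where
  x : ℕ → K
  sg : Equiv.Perm ℕ → K →ₐ[k] K
  sg_x : ∀ e a, sg e (x a) = x (e a)
  sg_mul : ∀ e f z, sg e (sg f z) = sg (e * f) z
  sg_one : ∀ z, sg 1 z = z
  indep : AlgebraicIndependent k x

/-- The field of rational functions in countably many variables. -/
noncomputable def ratField (k : Type) [Field k] :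
    VarField k (FractionRing (MvPolynomial ℕ k)) := by
  let K := FractionRing (MvPolynomial ℕ k)
  let ι : MvPolynomial ℕ k →ₐ[k] K := IsScalarTower.toAlgHom k (MvPolynomial ℕ k) K
  have hι : Function.Injective ι := IsFractionRing.injective (MvPolynomial ℕ k) K
  let g : Equiv.Perm ℕ → MvPolynomial ℕ k →ₐ[k] K := fun e => ι.comp (MvPolynomial.rename e)
  have hg : ∀ e, Function.Injective (g e) := fun e =>
    hι.comp (MvPolynomial.rename_injective _ e.injective)
  let sg : Equiv.Perm ℕ → K →ₐ[k] K := fun e => IsFractionRing.liftAlgHom (hg e)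
  have hsg : ∀ e a, sg e (ι (MvPolynomial.X a)) = ι (MvPolynomial.X (e a)) := by
    intro e a
    have : sg e (algebraMap (MvPolynomial ℕ k) K (MvPolynomial.X a)) = g e (MvPolynomial.X a) :=
      IsFractionRing.lift_algebraMap (hg e) _
    refine this.trans ?_
    simp [g]
  have hext : ∀ f g : K →ₐ[k] K, (∀ a, f (ι (MvPolynomial.X a)) = g (ι (MvPolynomial.X a))) →
      f = g := by
    intro f g h
    refine IsLocalization.algHom_ext (nonZeroDivisors (MvPolynomial ℕ k)) ?_
    exact MvPolynomial.algHom_ext h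
  refine ⟨fun a => ι (MvPolynomial.X a), sg, hsg, ?_, ?_, ?_⟩
  · intro e f z
    have : (sg e).comp (sg f) = sg (e * f) := by
      apply hext
      intro a
      simp [hsg]
    exact DFunLike.congr_fun this z
  · intro z
    have : sg 1 = AlgHom.id k K := by
      apply hext
      intro a
      simp [hsg]
    exact DFunLike.congr_fun this z
  · have h := (MvPolynomial.algebraicIndependent_X ℕ k).map' hι
    exact h

lemma VarField.x_inj {K : Type} [Field K] [Algebra k K] (V : VarField k K) :
    Function.Injective V.x := V.indep.injective

lemma Qel_symm {A : Type} [CommRing A] [Algebra k A] (i j : I) (u v : A) :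
    Qel C i j u v = Qel C j i v u := by
  unfold Qel
  by_cases h : i = j
  · simp [h]
  · rw [if_neg h, if_neg (Ne.symm h), Finset.sum_comm]
    refine Finset.sum_congr rfl fun p _ => Finset.sum_congr rfl fun q _ => ?_
    rw [C.symmetrize i j, add_comm, C.t_symm, mul_comm (u ^ q)]

lemma Qdiff_spec {A : Type} [CommRing A] [Algebra k A] (i j : I) (u v w : A) :
    Qdiff C i j u v w * (u - w) = Qel C i j u v - Qel C i j w v := by
  unfold Qel Qdiff
  split_ifs with h
  · simp
  · rw [Finset.sum_mul, ← Finset.sum_sub_distrib]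
    refine Finset.sum_congr rfl fun p _ => ?_
    rw [Finset.sum_mul, ← Finset.sum_sub_distrib]
    refine Finset.sum_congr rfl fun q _ => ?_
    split_ifs
    · rw [← smul_sub, ← sub_mul, ← (Commute.all u w).geom_sum₂_mul]
      simp only [Algebra.smul_def]
      ring
    · simp

lemma Qel_ne {K : Type} [Field K] [Algebra k K] (V : VarField k K) {i j : I} (hij : i ≠ j)
    {a b : ℕ} (hab : a ≠ b) : Qel C i j (V.x a) (V.x b) ≠ 0 := by
  have h1 : Qel C i j (V.x a) (V.x b) =
      MvPolynomial.aeval V.x (Qel C i j (MvPolynomial.X a : MvPolynomial ℕ k) (MvPolynomial.X b)) := by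
    rw [map_Qel]; simp
  rw [h1]
  intro h0
  have h2 : Qel C i j (MvPolynomial.X a : MvPolynomial ℕ k) (MvPolynomial.X b) = 0 :=
    V.indep (by rw [h0, map_zero])
  have h3 := congrArg (MvPolynomial.aeval (fun c => if c = a then (1 : k) else 0)) h2
  rw [map_Qel, map_zero] at h3
  simp only [MvPolynomial.aeval_X, if_true, if_neg hab.symm] at h3
  refine C.t_lead i j hij ?_
  rw [← h3]
  unfold Qel
  rw [if_neg hij, Finset.sum_eq_single (-(C.a i j)).toNat, Finset.sum_eq_single 0]
  · have := C.a_nonpos i j hij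
    rw [if_pos]
    · simp
    · rw [Int.toNat_of_nonneg (by omega)]
      push_cast; ring
  · intro q _ hq
    split_ifs <;> simp [hq]
  · simp
  · intro p _ hp
    refine Finset.sum_eq_zero fun q _ => ?_
    split_ifs with hh
    · by_cases hq : q = 0
      · subst hq
        exfalso
        apply hp
        have : C.d i * ((p : ℤ) + C.a i j) = 0 := by push_cast at hh; linarith
        rcases mul_eq_zero.mp this with h | h
        · exact absurd h (C.d_pos i).ne'
        · omega
      · simp [hq]
    · rfl
  · simp

section rep
variable {K : Type} [Field K] [Algebra k K] (V : VarField k K)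

/-- Auxiliary order on `I`. -/
noncomputable def ordI (i : I) : ℕ := (Fintype.equivFin I i).val

lemma ordI_inj : Function.Injective (ordI (I := I)) := fun _ _ h =>
  (Fintype.equivFin I).injective (Fin.ext h)

noncomputable def PP (i j : I) (u v : K) : K :=
  if i = j then (u - v)⁻¹ else if ordI i < ordI j then Qel C i j u v else 1

noncomputable def BB (i j : I) (u v : K) : K := if i = j then -(u - v)⁻¹ else 0

lemma map_PP (f : K →ₐ[k] K) (i j : I) (u v : K) : f (PP C i j u v) = PP C i j (f u) (f v) := by
  unfold PP; split_ifs <;> simp [map_Qel]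

lemma map_BB (f : K →ₐ[k] K) (i j : I) (u v : K) : f (BB i j u v) = BB i j (f u) (f v) := by
  unfold BB; split_ifs <;> simp

lemma PP_mul {i j : I} (h : i ≠ j) (u v : K) : PP C i j u v * PP C j i v u = Qel C i j u v := by
  unfold PP
  rw [if_neg h, if_neg h.symm]
  rcases lt_trichotomy (ordI i) (ordI j) with h1 | h1 | h1
  · rw [if_pos h1, if_neg (by omega), mul_one]
  · exact absurd (ordI_inj h1) h
  · rw [if_pos h1, if_neg (by omega), one_mul, Qel_symm]

lemma PP_ne (i j : I) {a b : ℕ} (hab : a ≠ b) : PP C i j (V.x a) (V.x b) ≠ 0 := by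
  unfold PP
  split_ifs with h1 h2
  · exact inv_ne_zero (sub_ne_zero.mpr fun h => hab (V.x_inj h))
  · exact Qel_ne C V h1 hab
  · exact one_ne_zero

/-- The representation space. -/
abbrev LL (I K : Type) (n : ℕ) : Type := (Fin n → I) → K

/-- Simple transposition of the positions. -/
abbrev sp {n : ℕ} (l : ℕ) (h : l + 1 < n) : Equiv.Perm (Fin n) :=
  Equiv.swap (⟨l, Nat.lt_of_succ_lt h⟩ : Fin n) ⟨l + 1, h⟩

/-- Multiplication by a function. -/
def mulL {n : ℕ} (F : LL I K n) : Module.End k (LL I K n) := LinearMap.mulLeft k F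

@[simp] lemma mulL_apply {n : ℕ} (F g : LL I K n) (ν) : (mulL F : Module.End k (LL I K n)) g ν = F ν * g ν := rfl

/-- Action of a simple transposition. -/
def sL {n : ℕ} (l : ℕ) (h : l + 1 < n) : Module.End k (LL I K n) where
  toFun g ν := V.sg (Equiv.swap l (l + 1)) (g (ν ∘ sp l h))
  map_add' := by intros; ext; simp
  map_smul' := by intros; ext; simp

@[simp] lemma sL_apply {n : ℕ} (l : ℕ) (h : l + 1 < n) (g : LL I K n) (ν) :
    sL V l h g ν = V.sg (Equiv.swap l (l + 1)) (g (ν ∘ sp l h)) := rfl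

noncomputable def AF {n : ℕ} (l : ℕ) (h : l + 1 < n) : LL I K n := fun ν =>
  PP C (ν ⟨l, Nat.lt_of_succ_lt h⟩) (ν ⟨l + 1, h⟩) (V.x l) (V.x (l + 1))

noncomputable def BF {n : ℕ} (l : ℕ) (h : l + 1 < n) : LL I K n := fun ν =>
  BB (ν ⟨l, Nat.lt_of_succ_lt h⟩) (ν ⟨l + 1, h⟩) (V.x l) (V.x (l + 1))

noncomputable def tL {n : ℕ} (l : ℕ) (h : l + 1 < n) : Module.End k (LL I K n) :=
  mulL (AF C V l h) * sL V l h + mulL (BF V l h)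

lemma tL_apply {n : ℕ} (l : ℕ) (h : l + 1 < n) (g : LL I K n) (ν) :
    tL C V l h g ν = PP C (ν ⟨l, Nat.lt_of_succ_lt h⟩) (ν ⟨l + 1, h⟩) (V.x l) (V.x (l + 1)) *
      V.sg (Equiv.swap l (l + 1)) (g (ν ∘ sp l h)) +
      BB (ν ⟨l, Nat.lt_of_succ_lt h⟩) (ν ⟨l + 1, h⟩) (V.x l) (V.x (l + 1)) * g ν := rfl

def xL {n : ℕ} (a : ℕ) : Module.End k (LL I K n) := mulL fun _ => V.x a

@[simp] lemma xL_apply {n : ℕ} (a : ℕ) (g : LL I K n) (ν) :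
  xL V a g ν = V.x a * g ν := rfl

def eeL {n : ℕ} (μ : Fin n → I) : Module.End k (LL I K n) := mulL fun ν => if ν = μ then 1 else 0

@[simp] lemma eeL_apply {n : ℕ} (μ : Fin n → I) (g : LL I K n) (ν) :
  (eeL μ : Module.End k (LL I K n)) g ν = if ν = μ then g ν else 0 := by
  simp [eeL]

lemma sp_sp {n : ℕ} (l : ℕ) (h : l + 1 < n) (ν : Fin n → I) : (ν ∘ sp l h) ∘ sp l h = ν := by
  ext a; simp

lemma comp_sp_eq {n : ℕ} (l : ℕ) (h : l + 1 < n) (ν μ : Fin n → I) :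
    ν ∘ sp l h = μ ↔ ν = μ ∘ sp l h := by
  constructor
  · rintro rfl; rw [sp_sp]
  · rintro rfl; rw [sp_sp]

end rep

end KLR


namespace KLR

variable {k : Type} [Field k] {I : Type} [Fintype I] [DecidableEq I] (C : CartanDatum k I)
variable {K : Type} [Field K] [Algebra k K] (V : VarField k K)

lemma sp_left {n : ℕ} (l : ℕ) (h : l + 1 < n) (ν : Fin n → I) :
    (ν ∘ sp l h) ⟨l, Nat.lt_of_succ_lt h⟩ = ν ⟨l + 1, h⟩ := by simp

lemma sp_right {n : ℕ} (l : ℕ) (h : l + 1 < n) (ν : Fin n → I) :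
    (ν ∘ sp l h) ⟨l + 1, h⟩ = ν ⟨l, Nat.lt_of_succ_lt h⟩ := by simp

lemma sp_ne {n : ℕ} (l : ℕ) (h : l + 1 < n) (ν : Fin n → I) (c : ℕ) (hc : c < n) (h1 : c ≠ l)
    (h2 : c ≠ l + 1) : (ν ∘ sp l h) ⟨c, hc⟩ = ν ⟨c, hc⟩ := by
  simp only [Function.comp_apply]
  rw [Equiv.swap_apply_of_ne_of_ne] <;> simpa

lemma swx_ne (l c : ℕ) (h1 : c ≠ l) (h2 : c ≠ l + 1) :
    V.sg (Equiv.swap l (l + 1)) (V.x c) = V.x c := by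
  rw [V.sg_x, Equiv.swap_apply_of_ne_of_ne h1 h2]

lemma swx_left (l : ℕ) : V.sg (Equiv.swap l (l + 1)) (V.x l) = V.x (l + 1) := by
  rw [V.sg_x, Equiv.swap_apply_left]

lemma swx_right (l : ℕ) : V.sg (Equiv.swap l (l + 1)) (V.x (l + 1)) = V.x l := by
  rw [V.sg_x, Equiv.swap_apply_right]

lemma sw_sw (l : ℕ) (z : K) : V.sg (Equiv.swap l (l + 1)) (V.sg (Equiv.swap l (l + 1)) z) = z := by
  rw [V.sg_mul, Equiv.swap_mul_self, V.sg_one]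

lemma swap_braid {α : Type} [DecidableEq α] {a b c : α} (hab : a ≠ b) (hac : a ≠ c) (hbc : b ≠ c) :
    Equiv.swap b c * (Equiv.swap a b * Equiv.swap b c) =
      Equiv.swap a b * (Equiv.swap b c * Equiv.swap a b) := by
  rw [← mul_assoc, ← mul_assoc, Equiv.swap_mul_swap_mul_swap hab hac]
  rw [Equiv.swap_comm a b, Equiv.swap_comm b c, Equiv.swap_mul_swap_mul_swap hbc.symm hac.symm,
    Equiv.swap_comm]

lemma swap_disj {α : Type} [DecidableEq α] {a b c d : α} (h1 : a ≠ c) (h2 : a ≠ d) (h3 : b ≠ c)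
    (h4 : b ≠ d) : Equiv.swap a b * Equiv.swap c d = Equiv.swap c d * Equiv.swap a b := by
  ext z
  simp only [Equiv.Perm.mul_apply]
  by_cases za : z = a
  · subst za
    rw [Equiv.swap_apply_of_ne_of_ne h1 h2, Equiv.swap_apply_left, Equiv.swap_apply_of_ne_of_ne h3 h4]
  by_cases zb : z = b
  · subst zb
    rw [Equiv.swap_apply_of_ne_of_ne h3 h4, Equiv.swap_apply_right, Equiv.swap_apply_of_ne_of_ne h1 h2]
  rw [Equiv.swap_apply_of_ne_of_ne za zb]
  by_cases zc : z = c
  · subst zc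
    rw [Equiv.swap_apply_left, Equiv.swap_apply_of_ne_of_ne h2.symm h4.symm]
  by_cases zd : z = d
  · subst zd
    rw [Equiv.swap_apply_right, Equiv.swap_apply_of_ne_of_ne h1.symm h3.symm]
  rw [Equiv.swap_apply_of_ne_of_ne zc zd, Equiv.swap_apply_of_ne_of_ne za zb]

lemma sw_braid (l : ℕ) (z : K) :
    V.sg (Equiv.swap (l + 1) (l + 2)) (V.sg (Equiv.swap l (l + 1))
      (V.sg (Equiv.swap (l + 1) (l + 2)) z)) =
    V.sg (Equiv.swap l (l + 1)) (V.sg (Equiv.swap (l + 1) (l + 2))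
      (V.sg (Equiv.swap l (l + 1)) z)) := by
  simp only [V.sg_mul]
  rw [swap_braid (by omega) (by omega) (by omega)]

lemma sp_braid {n : ℕ} (l : ℕ) (h : l + 2 < n) (ν : Fin n → I) :
    ((ν ∘ sp (l + 1) h) ∘ sp l (Nat.lt_of_succ_lt h)) ∘ sp (l + 1) h =
    ((ν ∘ sp l (Nat.lt_of_succ_lt h)) ∘ sp (l + 1) h) ∘ sp l (Nat.lt_of_succ_lt h) := by
  have := swap_braid (a := (⟨l, by omega⟩ : Fin n)) (b := ⟨l + 1, by omega⟩) (c := ⟨l + 2, h⟩)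
    (by simp) (by simp) (by simp)
  ext a
  exact congrArg ν (Equiv.ext_iff.mp this a)

lemma sp_comm {n : ℕ} (l : ℕ) (h : l + 1 < n) (l' : ℕ) (h' : l' + 1 < n)
    (hh : l + 1 < l' ∨ l' + 1 < l) (ν : Fin n → I) :
    (ν ∘ sp l h) ∘ sp l' h' = (ν ∘ sp l' h') ∘ sp l h := by
  have := swap_disj (a := (⟨l, by omega⟩ : Fin n)) (b := ⟨l + 1, by omega⟩) (c := ⟨l', by omega⟩)
    (d := ⟨l' + 1, by omega⟩)
    (by simp; omega) (by simp; omega) (by simp; omega) (by simp; omega)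
  ext a
  exact congrArg ν (Equiv.ext_iff.mp this a)

lemma sw_comm (l l' : ℕ) (hh : l + 1 < l' ∨ l' + 1 < l) (z : K) :
    V.sg (Equiv.swap l (l + 1)) (V.sg (Equiv.swap l' (l' + 1)) z) =
    V.sg (Equiv.swap l' (l' + 1)) (V.sg (Equiv.swap l (l + 1)) z) := by
  simp only [V.sg_mul]
  rw [swap_disj (by omega) (by omega) (by omega) (by omega)]

lemma PP_self (i : I) (u v : K) : PP C i i u v = (u - v)⁻¹ := by simp [PP]
lemma BB_self (i : I) (u v : K) : BB i i u v = -(u - v)⁻¹ := by simp [BB]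
lemma BB_ne {i j : I} (h : i ≠ j) (u v : K) : BB i j u v = 0 := by simp [BB, h]

lemma tL_sq {n : ℕ} (l : ℕ) (h : l + 1 < n) (g : LL I K n) (ν : Fin n → I) :
    tL C V l h (tL C V l h g) ν = Qel C (ν ⟨l, Nat.lt_of_succ_lt h⟩) (ν ⟨l + 1, h⟩)
      (V.x l) (V.x (l + 1)) * g ν := by
  rw [tL_apply, tL_apply, tL_apply]
  simp only [map_add, map_mul, map_PP, map_BB, sp_left, sp_right, swx_left, swx_right, sw_sw, sp_sp]
  have hne : V.x l - V.x (l + 1) ≠ 0 := sub_ne_zero.mpr fun h => by simpa using V.x_inj h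
  have hne' : V.x (l + 1) - V.x l ≠ 0 := sub_ne_zero.mpr fun h => by simpa using V.x_inj h
  by_cases hij : ν ⟨l, Nat.lt_of_succ_lt h⟩ = ν ⟨l + 1, h⟩
  · simp only [hij, PP_self, BB_self, Qel, if_true]
    rw [← neg_sub (V.x (l + 1)) (V.x l), inv_neg]
    ring
  · rw [BB_ne hij, BB_ne (Ne.symm hij), ← PP_mul C hij]
    ring

lemma tL_comm {n : ℕ} (l : ℕ) (h : l + 1 < n) (l' : ℕ) (h' : l' + 1 < n)
    (hh : l + 1 < l' ∨ l' + 1 < l) (g : LL I K n) (ν : Fin n → I) :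
    tL C V l h (tL C V l' h' g) ν = tL C V l' h' (tL C V l h g) ν := by
  rw [tL_apply, tL_apply, tL_apply, tL_apply, tL_apply, tL_apply]
  simp only [map_add, map_mul, map_PP, map_BB]
  rw [sp_comm l h l' h' hh, sw_comm V l l' hh]
  rw [sp_ne l h ν l' (by omega) (by omega) (by omega), sp_ne l h ν (l'+1) (by omega) (by omega) (by omega),
    sp_ne l' h' ν l (by omega) (by omega) (by omega), sp_ne l' h' ν (l+1) (by omega) (by omega) (by omega),
    swx_ne V l l' (by omega) (by omega), swx_ne V l (l'+1) (by omega) (by omega),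
    swx_ne V l' l (by omega) (by omega), swx_ne V l' (l+1) (by omega) (by omega)]
  ring

lemma tL_x {n : ℕ} (l : ℕ) (h : l + 1 < n) (m : Fin n) (g : LL I K n) (ν : Fin n → I) :
    tL C V l h (xL V m g) ν - V.x (sp l h m) * tL C V l h g ν =
    if m = ⟨l, Nat.lt_of_succ_lt h⟩ ∧ ν ⟨l, Nat.lt_of_succ_lt h⟩ = ν ⟨l + 1, h⟩ then
            -(g ν)
          else if m = (⟨l + 1, h⟩ : Fin n) ∧ ν ⟨l, Nat.lt_of_succ_lt h⟩ = ν ⟨l + 1, h⟩ then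
            g ν
          else 0 := by
  rw [tL_apply, tL_apply]
  simp only [xL_apply, map_mul]
  have hne : V.x l - V.x (l + 1) ≠ 0 := sub_ne_zero.mpr fun h => by simpa using V.x_inj h
  have hs : V.sg (Equiv.swap l (l + 1)) (V.x m) = V.x (sp l h m) := by
    rw [V.sg_x]
    congr 1
    simp only [Equiv.swap_apply_def, Fin.ext_iff]
    split_ifs <;> simp_all
  rw [hs]
  by_cases hij : ν ⟨l, Nat.lt_of_succ_lt h⟩ = ν ⟨l + 1, h⟩
  · simp only [hij, BB_self, and_true]
    by_cases h1 : m = ⟨l, Nat.lt_of_succ_lt h⟩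
    · subst h1
      simp only [Equiv.swap_apply_left, if_true]
      field_simp
      ring
    · rw [if_neg h1]
      by_cases h2 : m = ⟨l + 1, h⟩
      · subst h2
        simp only [Equiv.swap_apply_right, if_true]
        field_simp
        ring
      · rw [if_neg h2, Equiv.swap_apply_of_ne_of_ne h1 h2]
        ring
  · simp only [BB_ne hij, hij, and_false, if_false]
    ring

lemma tL_braid {n : ℕ} (l : ℕ) (h : l + 2 < n) (g : LL I K n) (ν : Fin n → I) :
    tL C V (l + 1) h (tL C V l (Nat.lt_of_succ_lt h) (tL C V (l + 1) h g)) ν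
     - tL C V l (Nat.lt_of_succ_lt h) (tL C V (l + 1) h (tL C V l (Nat.lt_of_succ_lt h) g)) ν =
    if ν ⟨l, Nat.lt_of_succ_lt (Nat.lt_of_succ_lt h)⟩ = ν ⟨l + 2, h⟩ then
      Qdiff C (ν ⟨l, Nat.lt_of_succ_lt (Nat.lt_of_succ_lt h)⟩)
              (ν ⟨l + 1, Nat.lt_of_succ_lt h⟩) (V.x l) (V.x (l + 1)) (V.x (l + 2)) * g ν else 0 := by
  have a1 : ∀ ν : Fin n → I, (ν ∘ sp l (Nat.lt_of_succ_lt h)) ⟨l + 2, h⟩ = ν ⟨l + 2, h⟩ := fun ν =>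
    sp_ne _ _ _ _ _ (by omega) (by omega)
  have a2 : ∀ ν : Fin n → I, (ν ∘ sp (l + 1) h) ⟨l, Nat.lt_of_succ_lt (Nat.lt_of_succ_lt h)⟩ =
    ν ⟨l, Nat.lt_of_succ_lt (Nat.lt_of_succ_lt h)⟩ := fun ν =>
    sp_ne _ _ _ _ _ (by omega) (by omega)
  have a3 : ∀ ν : Fin n → I, (ν ∘ sp (l + 1) h) ⟨l + 2, h⟩ = ν ⟨l + 1, Nat.lt_of_succ_lt h⟩ :=
    fun ν => sp_right (l + 1) h ν
  have b1 : V.sg (Equiv.swap l (l + 1)) (V.x (l + 2)) = V.x (l + 2) :=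
    swx_ne V _ _ (by omega) (by omega)
  have b2 : V.sg (Equiv.swap (l + 1) (l + 2)) (V.x l) = V.x l :=
    swx_ne V _ _ (by omega) (by omega)
  have b3 : V.sg (Equiv.swap (l + 1) (l + 2)) (V.x (l + 2)) = V.x (l + 1) := swx_right V (l + 1)
  have b4 : V.sg (Equiv.swap (l + 1) (l + 2)) (V.x (l + 1)) = V.x (l + 2) := swx_left V (l + 1)
  have b5 : ∀ z, V.sg (Equiv.swap (l + 1) (l + 2)) (V.sg (Equiv.swap (l + 1) (l + 2)) z) = z :=
    sw_sw V (l + 1)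
  have tl2 : ∀ (g : LL I K n) (ν), tL C V (l + 1) h g ν =
      PP C (ν ⟨l + 1, Nat.lt_of_succ_lt h⟩) (ν ⟨l + 2, h⟩) (V.x (l + 1)) (V.x (l + 2)) *
      V.sg (Equiv.swap (l + 1) (l + 2)) (g (ν ∘ sp (l + 1) h)) +
      BB (ν ⟨l + 1, Nat.lt_of_succ_lt h⟩) (ν ⟨l + 2, h⟩) (V.x (l + 1)) (V.x (l + 2)) * g ν :=
    fun g ν => tL_apply C V (l + 1) h g ν
  have tl1 := fun (g : LL I K n) ν => tL_apply C V l (Nat.lt_of_succ_lt h) g ν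
  simp only [tl1, tl2]
  simp only [map_add, map_mul, map_PP, map_BB, sp_left, sp_right, swx_left, swx_right, sw_sw, sp_sp,
    a1, a2, a3, b1, b2, b3, b4, b5]
  rw [sp_braid, sw_braid]
  have n1 : V.x l - V.x (l + 1) ≠ 0 := sub_ne_zero.mpr fun h => by simpa using V.x_inj h
  have n2 : V.x (l + 1) - V.x (l + 2) ≠ 0 := sub_ne_zero.mpr fun h => by simpa using V.x_inj h
  have n3 : V.x l - V.x (l + 2) ≠ 0 := sub_ne_zero.mpr fun h => by simpa using V.x_inj h
  have hQ := Qdiff_spec C (ν ⟨l, Nat.lt_of_succ_lt (Nat.lt_of_succ_lt h)⟩)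
              (ν ⟨l + 1, Nat.lt_of_succ_lt h⟩) (V.x l) (V.x (l + 1)) (V.x (l + 2))
  generalize V.sg (Equiv.swap l (l + 1)) (V.sg (Equiv.swap (l + 1) (l + 2))
    (V.sg (Equiv.swap l (l + 1)) _)) = G121
  generalize V.sg (Equiv.swap l (l + 1)) (V.sg (Equiv.swap (l + 1) (l + 2)) (g ((ν ∘ _) ∘ _))) = G12
  generalize V.sg (Equiv.swap (l + 1) (l + 2)) (V.sg (Equiv.swap l (l + 1)) (g ((ν ∘ _) ∘ _))) = G21
  generalize V.sg (Equiv.swap (l + 1) (l + 2)) (g (ν ∘ _)) = G2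
  generalize V.sg (Equiv.swap l (l + 1)) (g (ν ∘ _)) = G1
  generalize g ν = G0
  revert hQ n1 n2 n3
  generalize ν ⟨l, _⟩ = i
  generalize ν ⟨l + 1, _⟩ = j
  generalize ν ⟨l + 2, _⟩ = m
  generalize V.x l = x
  generalize V.x (l + 1) = y
  generalize V.x (l + 2) = z
  clear * -
  intro n1 n2 n3 hQ
  have n1' : y - x ≠ 0 := by rwa [← neg_sub, neg_ne_zero]
  have n2' : z - y ≠ 0 := by rwa [← neg_sub, neg_ne_zero]
  have n3' : z - x ≠ 0 := by rwa [← neg_sub, neg_ne_zero]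
  by_cases h12 : i = j
  · subst h12
    by_cases h23 : i = m
    · subst h23
      simp only [PP_self, BB_self, Qdiff, if_true]
      field_simp
      ring
    · simp only [PP_self, BB_self, BB_ne h23, BB_ne (Ne.symm h23), if_neg h23]
      field_simp
      ring
  · by_cases h23 : j = m
    · subst h23
      simp only [PP_self, BB_self, BB_ne h12, BB_ne (Ne.symm h12), if_neg h12]
      field_simp
      ring
    · by_cases h13 : i = m
      · subst h13
        simp only [PP_self, BB_self, BB_ne h12, BB_ne (Ne.symm h12), if_true]
        rw [← PP_mul C h12, ← PP_mul C h12] at hQ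
        rw [eq_div_of_mul_eq n3 hQ]
        field_simp
        ring
      · simp only [BB_ne h12, BB_ne h23, BB_ne h13, BB_ne (Ne.symm h12), BB_ne (Ne.symm h23),
          if_neg h13]
        ring

/-- The rational representation satisfies the KLR relations. -/
lemma repRels (n : ℕ) : Rels C (n := n) (A := Module.End k (LL I K n)) eeL (fun a => xL V a.val)
    (fun l h => tL C V l h) := by
  have hQel : ∀ (i j : I) (a b : ℕ) (g : LL I K n) ν,
      (Qel C i j (xL V a) (xL V b) : Module.End k (LL I K n)) g ν =
        Qel C i j (V.x a) (V.x b) * g ν := by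
    intro i j a b g ν
    have h1 := map_Qel C (Algebra.lmul k (LL I K n)) i j (fun _ => V.x a) (fun _ => V.x b)
    have h2 := map_Qel C (Pi.evalAlgHom k (fun _ : Fin n → I => K) ν) i j (fun _ => V.x a) (fun _ => V.x b)
    have h3 : (Qel C i j (xL V a) (xL V b) : Module.End k (LL I K n)) =
      Algebra.lmul k (LL I K n) (Qel C i j (fun _ => V.x a) (fun _ => V.x b)) := h1.symm
    rw [h3]
    have h4 : (Qel C i j (fun _ => V.x a) (fun _ => V.x b) : LL I K n) ν = Qel C i j (V.x a) (V.x b) := h2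
    rw [← h4]
    rfl
  have hQd : ∀ (i j : I) (a b c : ℕ) (g : LL I K n) ν,
      (Qdiff C i j (xL V a) (xL V b) (xL V c) : Module.End k (LL I K n)) g ν =
        Qdiff C i j (V.x a) (V.x b) (V.x c) * g ν := by
    intro i j a b c g ν
    have h1 := map_Qdiff C (Algebra.lmul k (LL I K n)) i j (fun _ => V.x a) (fun _ => V.x b) (fun _ => V.x c)
    have h2 := map_Qdiff C (Pi.evalAlgHom k (fun _ : Fin n → I => K) ν) i j (fun _ => V.x a) (fun _ => V.x b) (fun _ => V.x c)
    have h3 : (Qdiff C i j (xL V a) (xL V b) (xL V c) : Module.End k (LL I K n)) =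
      Algebra.lmul k (LL I K n) (Qdiff C i j (fun _ => V.x a) (fun _ => V.x b) (fun _ => V.x c)) := h1.symm
    rw [h3]
    have h4 : (Qdiff C i j (fun _ => V.x a) (fun _ => V.x b) (fun _ => V.x c) : LL I K n) ν = Qdiff C i j (V.x a) (V.x b) (V.x c) := h2
    rw [← h4]
    rfl
  constructor
  · intro ν ν'
    refine LinearMap.ext fun g => funext fun μ => ?_
    by_cases h : ν = ν'
    · subst h; simp only [Module.End.mul_apply, eeL_apply, if_true]; split_ifs <;> rfl
    · simp only [Module.End.mul_apply, eeL_apply, if_neg h, LinearMap.zero_apply, Pi.zero_apply]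
      split_ifs with h1 h2
      · exact absurd (h1.symm.trans h2) h
      · rfl
      · rfl
  · refine LinearMap.ext fun g => funext fun μ => ?_
    simp [LinearMap.sum_apply, Finset.sum_apply]
  · intro a b
    refine LinearMap.ext fun g => funext fun μ => ?_
    simp only [Module.End.mul_apply, xL_apply]; ring
  · intro a b
    refine LinearMap.ext fun g => funext fun μ => ?_
    simp [Module.End.mul_apply]
  · intro l h ν
    refine LinearMap.ext fun g => funext fun μ => ?_
    simp only [Module.End.mul_apply, eeL_apply, tL_apply]
    by_cases h1 : μ = ν ∘ sp l h
    · have h2 : μ ∘ sp l h = ν := (comp_sp_eq l h μ ν).mpr h1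
      rw [if_pos h1, if_pos h2]
      by_cases h3 : μ = ν
      · rw [if_pos h3]
      · rw [if_neg h3, BB_ne]
        · simp
        · intro h4
          apply h3
          rw [h1]
          ext a
          rw [Function.comp_apply, Equiv.swap_apply_def]
          rw [h1, sp_left, sp_right] at h4
          split_ifs with h5 h6
          · rw [h5, h4]
          · rw [h6, h4]
          · rfl
    · have h2 : ¬ μ ∘ sp l h = ν := fun h => h1 ((comp_sp_eq l _ μ ν).mp h)
      rw [if_neg h1, if_neg h2]
      by_cases h3 : μ = ν
      · rw [BB_ne]
        · simp
        · intro h4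
          apply h2
          rw [← h3]
          ext a
          rw [Function.comp_apply, Equiv.swap_apply_def]
          split_ifs with h5 h6
          · rw [h5, h4]
          · rw [h6, h4]
          · rfl
      · rw [if_neg h3]; simp
  · intro l h l' h' hh
    exact LinearMap.ext fun g => funext fun μ => tL_comm C V l h l' h' hh g μ
  · intro l h ν
    refine LinearMap.ext fun g => funext fun μ => ?_
    rw [pow_two]
    simp only [Module.End.mul_apply]
    rw [tL_sq, hQel]
    by_cases h1 : μ = ν
    · rw [h1]
    · simp [h1]
  · intro l h m ν
    refine LinearMap.ext fun g => funext fun μ => ?_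
    have := tL_x C V l h m ((eeL ν : Module.End k (LL I K n)) g) μ
    simp only [Module.End.mul_apply, LinearMap.sub_apply, Pi.sub_apply, xL_apply]
    refine this.trans ?_
    by_cases h1 : μ = ν
    · rw [h1]
      split_ifs <;> simp
    · simp only [eeL_apply, if_neg h1]
      split_ifs <;> simp [h1]
  · intro l h ν
    refine LinearMap.ext fun g => funext fun μ => ?_
    have := tL_braid C V l h ((eeL ν : Module.End k (LL I K n)) g) μ
    simp only [Module.End.mul_apply, LinearMap.sub_apply, Pi.sub_apply]
    refine this.trans ?_
    by_cases h1 : μ = ν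
    · rw [h1]
      split_ifs
      · rw [Module.End.mul_apply, hQd]
      · simp
    · simp only [eeL_apply, if_neg h1]
      split_ifs
      · rw [Module.End.mul_apply, hQd]
        simp [h1]
      · simp
      · rw [Module.End.mul_apply, hQd]
        simp [h1]
      · simp

/-- The rational representation of `R(n)`. -/
noncomputable def rho (n : ℕ) : Alg C n →ₐ[k] Module.End k (LL I K n) := algLift (repRels C V n)

end KLR


namespace KLR

variable {k : Type} [Field k] {I : Type} [Fintype I] [DecidableEq I] (C : CartanDatum k I)

/-! ### Idempotents -/

/-- Sum of the idempotents in a finite set. -/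
noncomputable def eS {n : ℕ} (s : Finset (Fin n → I)) : Alg C n := ∑ ν ∈ s, Ee C ν

lemma eS_mul_Ee {n : ℕ} (s : Finset (Fin n → I)) (μ) :
    eS C s * Ee C μ = if μ ∈ s then Ee C μ else 0 := by
  unfold eS
  rw [Finset.sum_mul]
  simp only [(algRels C n).ee]
  rw [← Finset.sum_ite_eq' s μ (fun ν => Ee C ν)]

lemma Ee_mul_eS {n : ℕ} (s : Finset (Fin n → I)) (μ) :
    Ee C μ * eS C s = if μ ∈ s then Ee C μ else 0 := by
  unfold eS
  rw [Finset.mul_sum]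
  simp only [(algRels C n).ee]
  rw [Finset.sum_ite_eq s μ (fun ν => Ee C μ)]

lemma ext_e {n : ℕ} {z w : Alg C n} (h : ∀ μ, z * Ee C μ = w * Ee C μ) : z = w := by
  rw [← mul_one z, ← mul_one w, ← (algRels C n).esum, Finset.mul_sum, Finset.mul_sum]
  exact Finset.sum_congr rfl fun μ _ => h μ

lemma eS_univ {n : ℕ} : eS C (Finset.univ : Finset (Fin n → I)) = 1 := (algRels C n).esum

lemma eS_mul_eS {n : ℕ} (s t : Finset (Fin n → I)) : eS C s * eS C t = eS C (s ∩ t) := by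
  refine ext_e C fun μ => ?_
  rw [mul_assoc, eS_mul_Ee, eS_mul_Ee]
  by_cases h : μ ∈ t
  · rw [if_pos h, eS_mul_Ee]; simp [h]
  · simp [h]

lemma X_eS {n : ℕ} (s : Finset (Fin n → I)) (a) : Xx C a * eS C s = eS C s * Xx C a := by
  unfold eS
  rw [Finset.mul_sum, Finset.sum_mul]
  exact Finset.sum_congr rfl fun ν _ => (algRels C n).xe a ν

lemma T_eS {n : ℕ} (s t : Finset (Fin n → I)) (l h) (hs : ∀ ν, ν ∈ t ↔ ν ∘ sp l h ∈ s) :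
    Tt C l h * eS C s = eS C t * Tt C l h := by
  refine ext_e C fun μ => ?_
  rw [mul_assoc, eS_mul_Ee, mul_assoc, (algRels C n).taue, ← mul_assoc, eS_mul_Ee]
  have : μ ∘ sp l h ∈ t ↔ μ ∈ s := by rw [hs, sp_sp]
  by_cases h1 : μ ∈ s
  · rw [if_pos h1, if_pos (this.mpr h1), (algRels C n).taue]
  · rw [if_neg h1, if_neg (fun h => h1 (this.mp h))]; simp

/-- Sequences with given initial part. -/
def sInit {n : ℕ} (ν : Fin n → I) : Finset (Fin (n + 1) → I) :=
  Finset.univ.filter fun μ => Fin.init μ = ν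

/-- Sequences with given last entry. -/
def sLast (n : ℕ) (i : I) : Finset (Fin (n + 1) → I) :=
  Finset.univ.filter fun μ => μ (Fin.last n) = i

lemma mem_sInit {n : ℕ} (ν : Fin n → I) (μ) : μ ∈ sInit ν ↔ Fin.init μ = ν := by simp [sInit]
lemma mem_sLast (n : ℕ) (i : I) (μ) : μ ∈ sLast n i ↔ μ (Fin.last n) = i := by simp [sLast]

lemma init_comp_sp {n : ℕ} (l : ℕ) (h : l + 1 < n) (μ : Fin (n + 1) → I) :
    Fin.init (μ ∘ sp l (Nat.lt_succ_of_lt h)) = (Fin.init μ) ∘ sp l h := by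
  funext a
  simp only [Fin.init, Function.comp_apply, Equiv.swap_apply_def, Fin.ext_iff, Fin.val_castSucc]
  split_ifs <;> rfl

lemma last_comp_sp {n : ℕ} (l : ℕ) (h : l + 1 < n) (μ : Fin (n + 1) → I) :
    (μ ∘ sp l (Nat.lt_succ_of_lt h)) (Fin.last n) = μ (Fin.last n) := by
  simp only [Function.comp_apply, Equiv.swap_apply_def, Fin.ext_iff, Fin.val_last]
  rw [if_neg (by omega), if_neg (by omega)]

lemma castSucc_swap {n : ℕ} (l : ℕ) (h : l + 1 < n) (m : Fin n) :
    (sp l h m).castSucc = sp l (Nat.lt_succ_of_lt h) m.castSucc := by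
  simp only [Equiv.swap_apply_def, Fin.ext_iff, Fin.val_castSucc]
  split_ifs <;> rfl

lemma iotaRels (n : ℕ) : Rels C (n := n) (A := Alg C (n + 1)) (fun ν => eS C (sInit ν))
    (fun a => Xx C a.castSucc) (fun l h => Tt C l (Nat.lt_succ_of_lt h)) := by
  have R := algRels C (n + 1)
  have hneg : ∀ a b : Alg C (n + 1), -a * b = -(a * b) := fun a b => neg_mul a b
  have hneg0 : -(0 : Alg C (n + 1)) = 0 := neg_zero
  constructor
  · intro ν ν'
    refine ext_e C fun μ => ?_
    rw [mul_assoc, eS_mul_Ee]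
    by_cases h : Fin.init μ = ν'
    · rw [if_pos ((mem_sInit _ _).mpr h), eS_mul_Ee]
      by_cases h2 : ν = ν'
      · rw [if_pos h2, eS_mul_Ee]
      · rw [if_neg h2, if_neg, zero_mul]
        rw [mem_sInit, h]; exact Ne.symm h2
    · rw [if_neg ((mem_sInit _ _).not.mpr h), mul_zero]
      by_cases h2 : ν = ν'
      · rw [if_pos h2, eS_mul_Ee, if_neg]
        rw [mem_sInit, h2]; exact h
      · rw [if_neg h2, zero_mul]
  · refine ext_e C fun μ => ?_
    rw [Finset.sum_mul, one_mul]
    simp only [eS_mul_Ee, mem_sInit]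
    simp
  · intro a b; exact R.xx _ _
  · intro a ν; exact X_eS C _ _
  · intro l h ν
    refine T_eS C _ _ _ _ fun μ => ?_
    rw [mem_sInit, mem_sInit, init_comp_sp, comp_sp_eq]
  · intro l h l' h' hh
    exact R.tautau _ _ _ _ hh
  · intro l h ν
    refine ext_e C fun μ => ?_
    rw [mul_assoc, mul_assoc, eS_mul_Ee]
    split_ifs with hm
    · rw [mem_sInit] at hm
      subst hm
      exact R.tausq _ _ _
    · simp
  · intro l h m ν
    refine ext_e C fun μ => ?_
    rw [mul_assoc, eS_mul_Ee, castSucc_swap]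
    by_cases hm : μ ∈ sInit ν
    · rw [if_pos hm]
      refine (R.taux l (Nat.lt_succ_of_lt h) m.castSucc μ).trans ?_
      have hm' := hm
      rw [mem_sInit] at hm
      subst hm
      simp only [ite_mul, hneg, zero_mul, eS_mul_Ee, if_pos hm']
      simp only [Fin.ext_iff, Fin.val_castSucc]
      rfl
    · rw [if_neg hm]
      simp only [ite_mul, hneg, zero_mul, eS_mul_Ee, if_neg hm, hneg0]
      simp
  · intro l h ν
    refine ext_e C fun μ => ?_
    rw [mul_assoc, eS_mul_Ee]
    by_cases hm : μ ∈ sInit ν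
    · rw [if_pos hm]
      refine (R.braid l (Nat.lt_succ_of_lt h) μ).trans ?_
      have hm' := hm
      rw [mem_sInit] at hm
      subst hm
      simp only [ite_mul, zero_mul, mul_assoc, eS_mul_Ee, if_pos hm']
      rfl
    · rw [if_neg hm]
      simp only [ite_mul, zero_mul, mul_assoc, eS_mul_Ee, if_neg hm]
      simp

/-- The unital embedding `R(n) → R(n+1)`. -/
noncomputable def iota (n : ℕ) : Alg C n →ₐ[k] Alg C (n + 1) := algLift (iotaRels C n)

@[simp] lemma iota_Ee (n : ℕ) (ν) : iota C n (Ee C ν) = eS C (sInit ν) := by simp [iota]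
@[simp] lemma iota_Xx (n : ℕ) (a) : iota C n (Xx C a) = Xx C a.castSucc := by simp [iota]
@[simp] lemma iota_Tt (n : ℕ) (l h) : iota C n (Tt C l h) = Tt C l (Nat.lt_succ_of_lt h) := by
  simp [iota]

/-- The idempotent `ε_i`. -/
noncomputable def eps (n : ℕ) (i : I) : Alg C (n + 1) := eS C (sLast n i)

lemma iota_comm_of (n : ℕ) (y : Alg C (n + 1)) (he : ∀ ν, eS C (sInit ν) * y = y * eS C (sInit ν))
    (hx : ∀ a : Fin n, Xx C a.castSucc * y = y * Xx C a.castSucc)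
    (ht : ∀ l (h : l + 1 < n), Tt C l (Nat.lt_succ_of_lt h) * y = y * Tt C l (Nat.lt_succ_of_lt h))
    (s : Alg C n) : iota C n s * y = y * iota C n s := by
  let S : Subalgebra k (Alg C n) :=
    (Subalgebra.centralizer k {y}).comap (iota C n)
  have : s ∈ S := by
    refine alg_top C S ?_ ?_ ?_ s
    · intro ν
      simp only [S, Subalgebra.mem_comap, Subalgebra.mem_centralizer_iff, Set.mem_singleton_iff, forall_eq, iota_Ee]
      exact (he ν).symm
    · intro ν
      simp only [S, Subalgebra.mem_comap, Subalgebra.mem_centralizer_iff, Set.mem_singleton_iff, forall_eq, iota_Xx]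
      exact (hx ν).symm
    · intro l h
      simp only [S, Subalgebra.mem_comap, Subalgebra.mem_centralizer_iff, Set.mem_singleton_iff, forall_eq, iota_Tt]
      exact (ht l h).symm
  simp only [S, Subalgebra.mem_comap, Subalgebra.mem_centralizer_iff, Set.mem_singleton_iff, forall_eq] at this
  exact this.symm

lemma iota_eps (n : ℕ) (i : I) (s) : iota C n s * eps C n i = eps C n i * iota C n s := by
  refine iota_comm_of C n _ ?_ ?_ ?_ s
  · intro ν
    unfold eps
    rw [eS_mul_eS, eS_mul_eS, Finset.inter_comm]
  · intro a; exact X_eS C _ _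
  · intro l h
    refine T_eS C _ _ _ _ fun μ => ?_
    rw [mem_sLast, mem_sLast, last_comp_sp l h]

lemma X_eps (n : ℕ) (i : I) (a) : Xx C a * eps C n i = eps C n i * Xx C a := X_eS C _ _

lemma tau_x_far {n : ℕ} (l : ℕ) (h : l + 1 < n) (m : Fin n) (h1 : m.val ≠ l) (h2 : m.val ≠ l + 1) :
    Tt C l h * Xx C m = Xx C m * Tt C l h := by
  refine ext_e C fun μ => ?_
  have := (algRels C n).taux l h m μ
  rw [if_neg (fun h => h1 (Fin.ext_iff.mp h.1)), if_neg (fun h => h2 (Fin.ext_iff.mp h.1)),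
    Equiv.swap_apply_of_ne_of_ne (fun h => h1 (Fin.ext_iff.mp h))
      (fun h => h2 (Fin.ext_iff.mp h)), sub_mul, sub_eq_zero] at this
  exact this

lemma iota_xlast (n : ℕ) (s) :
    iota C n s * Xx C (Fin.last n) = Xx C (Fin.last n) * iota C n s := by
  refine iota_comm_of C n _ ?_ ?_ ?_ s
  · intro ν; exact (X_eS C _ _).symm
  · intro a; exact (algRels C _).xx _ _
  · intro l h
    exact tau_x_far C _ _ _ (by simp; omega) (by simp; omega)

lemma eps_mul (n : ℕ) (i j : I) : eps C n i * eps C n j = if i = j then eps C n i else 0 := by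
  unfold eps
  rw [eS_mul_eS]
  split_ifs with h
  · rw [h, Finset.inter_self]
  · have : sLast n i ∩ sLast n j = ∅ := by
      ext μ
      simp only [Finset.mem_inter, mem_sLast, Finset.notMem_empty, iff_false]
      rintro ⟨rfl, h2⟩
      exact h h2
    rw [this]; simp [eS]

lemma eps_sum (n : ℕ) : ∑ i, eps C n i = 1 := by
  refine ext_e C fun μ => ?_
  unfold eps
  rw [Finset.sum_mul, one_mul]
  simp only [eS_mul_Ee, mem_sLast]
  simp

lemma Ee_eq (n : ℕ) (ν : Fin (n + 1) → I) :
    Ee C ν = iota C n (Ee C (Fin.init ν)) * eps C n (ν (Fin.last n)) := by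
  rw [iota_Ee, eps, eS_mul_eS]
  have : sInit (Fin.init ν) ∩ sLast n (ν (Fin.last n)) = {ν} := by
    ext μ
    simp only [Finset.mem_inter, mem_sInit, mem_sLast, Finset.mem_singleton]
    constructor
    · rintro ⟨h1, h2⟩
      rw [← Fin.snoc_init_self μ, ← Fin.snoc_init_self ν, h1, h2]
    · rintro rfl; simp
  rw [this]; simp [eS]

end KLR


namespace KLR

variable {k : Type} [Field k] {I : Type} [Fintype I] [DecidableEq I] (C : CartanDatum k I)

/-! ### The spanning statement -/

/-- `evl φ x f = ∑ φ(s_p) x^p`. -/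
noncomputable def evl {S B : Type} [Ring S] [Algebra k S] [Ring B] [Algebra k B]
    (φ : S →ₗ[k] B) (x : B) : Polynomial S →ₗ[k] B :=
  Polynomial.lsum fun p => (LinearMap.mulRight k (x ^ p)).comp φ

lemma evl_monomial {S B : Type} [Ring S] [Algebra k S] [Ring B] [Algebra k B]
    (φ : S →ₗ[k] B) (x : B) (p : ℕ) (s : S) : evl φ x (Polynomial.monomial p s) = φ s * x ^ p := by
  unfold evl
  rw [Polynomial.lsum_apply, Polynomial.sum_monomial_index]
  · rfl
  · simp

/-- `asm v φ x f = ∑ v_a evl(f_a)`. -/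
noncomputable def asm {S B : Type} [Ring S] [Algebra k S] [Ring B] [Algebra k B] {m : ℕ}
    (v : Fin m → B) (φ : S →ₗ[k] B) (x : B) : (Fin m → Polynomial S) →ₗ[k] B :=
  ∑ a, (LinearMap.mulLeft k (v a)).comp ((evl φ x).comp (LinearMap.proj a))

lemma asm_apply {S B : Type} [Ring S] [Algebra k S] [Ring B] [Algebra k B] {m : ℕ}
    (v : Fin m → B) (φ : S →ₗ[k] B) (x : B) (f) :
    asm v φ x f = ∑ a, v a * evl φ x (f a) := by
  simp [asm]

/-- `s ↦ ι(s) ε_i`. -/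
noncomputable def phiA (n : ℕ) (i : I) : Alg C n →ₗ[k] Alg C (n + 1) :=
  (LinearMap.mulRight k (eps C n i)).comp (iota C n).toLinearMap

lemma phiA_apply (n : ℕ) (i : I) (s) : phiA C n i s = iota C n s * eps C n i := rfl

/-- Total version of `τ_l`. -/
noncomputable def tt (n : ℕ) (l : ℕ) : Alg C n := if h : l + 1 < n then Tt C l h else 0

lemma tt_eq {n l : ℕ} (h : l + 1 < n) : tt C n l = Tt C l h := by simp [tt, h]

/-- `τ_{n-m} ⋯ τ_{n-1}`. -/
noncomputable def vv (n : ℕ) : ℕ → Alg C (n + 1)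
  | 0 => 1
  | m + 1 => tt C (n + 1) (n - 1 - m) * vv n m

/-- The subalgebra generated by all but the last `τ`. -/
noncomputable def HH (n : ℕ) : Subalgebra k (Alg C (n + 1)) :=
  Algebra.adjoin k ((Set.range (Ee C) ∪ Set.range (Xx C)) ∪ {z | ∃ l, l + 1 < n ∧ z = tt C (n + 1) l})

/-- The polynomial subalgebra. -/
noncomputable def PA (n : ℕ) : Subalgebra k (Alg C n) :=
  Algebra.adjoin k (Set.range (Ee C) ∪ Set.range (Xx C))

lemma PA_le (n : ℕ) (S : Subalgebra k (Alg C n)) (he : ∀ ν, Ee C ν ∈ S) (hx : ∀ a, Xx C a ∈ S) :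
    PA C n ≤ S := by
  refine Algebra.adjoin_le ?_
  rintro z (⟨ν, rfl⟩ | ⟨a, rfl⟩)
  · exact he ν
  · exact hx a

lemma Ee_PA {n : ℕ} (ν) : Ee C ν ∈ PA C n := Algebra.subset_adjoin (Or.inl ⟨ν, rfl⟩)
lemma Xx_PA {n : ℕ} (a) : Xx C a ∈ PA C n := Algebra.subset_adjoin (Or.inr ⟨a, rfl⟩)

lemma mem_PA_of {n : ℕ} (z : Alg C n) (h : ∀ ν, z * Ee C ν ∈ PA C n) : z ∈ PA C n := by
  rw [← mul_one z, ← (algRels C n).esum, Finset.mul_sum]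
  exact Subalgebra.sum_mem _ fun ν _ => h ν

lemma Qel_mem {A : Type} [Ring A] [Algebra k A] (S : Subalgebra k A) (i j : I) (u v : A) (hu : u ∈ S)
    (hv : v ∈ S) : Qel C i j u v ∈ S := by
  have := map_Qel C S.val i j ⟨u, hu⟩ ⟨v, hv⟩
  simp only [Subalgebra.coe_val] at this
  rw [← this]; exact Subtype.property _

lemma Qdiff_mem {A : Type} [Ring A] [Algebra k A] (S : Subalgebra k A) (i j : I) (u v w : A) (hu : u ∈ S)
    (hv : v ∈ S) (hw : w ∈ S) : Qdiff C i j u v w ∈ S := by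
  have := map_Qdiff C S.val i j ⟨u, hu⟩ ⟨v, hv⟩ ⟨w, hw⟩
  simp only [Subalgebra.coe_val] at this
  rw [← this]; exact Subtype.property _

lemma tsq_mem {n : ℕ} (l h) : Tt C l h * Tt C l h ∈ PA C n := by
  refine mem_PA_of C _ fun ν => ?_
  rw [← pow_two, (algRels C n).tausq]
  exact Subalgebra.mul_mem _ (Qel_mem C _ _ _ _ _ (Xx_PA C _) (Xx_PA C _)) (Ee_PA C _)

lemma taux_mem {n : ℕ} (l h) (m) :
    Tt C l h * Xx C m - Xx C (sp l h m) * Tt C l h ∈ PA C n := by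
  refine mem_PA_of C _ fun ν => ?_
  rw [(algRels C n).taux]
  split_ifs
  · exact Subalgebra.neg_mem _ (Ee_PA C _)
  · exact Ee_PA C _
  · exact Subalgebra.zero_mem _

lemma braid_mem {n : ℕ} (l : ℕ) (h : l + 2 < n) :
    Tt C (l + 1) h * Tt C l (Nat.lt_of_succ_lt h) * Tt C (l + 1) h -
    Tt C l (Nat.lt_of_succ_lt h) * Tt C (l + 1) h * Tt C l (Nat.lt_of_succ_lt h) ∈ PA C n := by
  refine mem_PA_of C _ fun ν => ?_
  rw [(algRels C n).braid]
  split_ifs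
  · exact Subalgebra.mul_mem _ (Qdiff_mem C _ _ _ _ _ _ (Xx_PA C _) (Xx_PA C _) (Xx_PA C _)) (Ee_PA C _)
  · exact Subalgebra.zero_mem _

/-- The filtration. -/
noncomputable def NN (n m : ℕ) : Submodule k (Alg C (n + 1)) :=
  Submodule.span k {z | ∃ c ≤ m, ∃ h ∈ HH C n, z = vv C n c * h}

variable (n : ℕ)

lemma NN_mono {m m' : ℕ} (h : m ≤ m') : NN C n m ≤ NN C n m' := by
  refine Submodule.span_mono ?_
  rintro z ⟨c, hc, w, hw, rfl⟩
  exact ⟨c, hc.trans h, w, hw, rfl⟩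

lemma mem_NN {c m : ℕ} (hc : c ≤ m) {h} (hh : h ∈ HH C n) : vv C n c * h ∈ NN C n m :=
  Submodule.subset_span ⟨c, hc, h, hh, rfl⟩

lemma NN_stab {m m' : ℕ} (y : Alg C (n + 1))
    (H : ∀ c ≤ m, ∀ h ∈ HH C n, y * (vv C n c * h) ∈ NN C n m') :
    ∀ z ∈ NN C n m, y * z ∈ NN C n m' := by
  intro z hz
  have : NN C n m ≤ (NN C n m').comap (LinearMap.mulLeft k y) := by
    refine Submodule.span_le.mpr ?_
    rintro z ⟨c, hc, w, hw, rfl⟩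
    exact H c hc w hw
  exact this hz

lemma tt_comm {m l l' : ℕ} (h : l + 1 < l' ∨ l' + 1 < l) : tt C m l * tt C m l' = tt C m l' * tt C m l := by
  unfold tt
  split_ifs with h1 h2
  · exact (algRels C m).tautau _ _ _ _ h
  · simp
  · simp
  · simp

lemma tt_vv {c j : ℕ} (h : j + 1 + c < n) : tt C (n + 1) j * vv C n c = vv C n c * tt C (n + 1) j := by
  induction c with
  | zero => simp [vv]
  | succ c ih =>
    rw [vv, ← mul_assoc, tt_comm C (Or.inl (by omega)), mul_assoc, ih (by omega), mul_assoc]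

lemma tt_HH {l : ℕ} (h : l + 1 < n) : tt C (n + 1) l ∈ HH C n :=
  Algebra.subset_adjoin (Or.inr ⟨l, h, rfl⟩)

lemma PA_HH : PA C (n + 1) ≤ HH C n := Algebra.adjoin_mono Set.subset_union_left

lemma tt_up {m : ℕ} (hm : m < n) : ∀ z ∈ NN C n m, tt C (n + 1) (n - 1 - m) * z ∈ NN C n (m + 1) := by
  refine NN_stab C n _ fun c hc h hh => ?_
  rcases Nat.lt_or_ge c m with h1 | h1
  · rw [← mul_assoc, tt_vv C n (by omega), mul_assoc]
    exact mem_NN C n (by omega) ((HH C n).mul_mem (tt_HH C n (by omega)) hh)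
  · have : c = m := le_antisymm hc h1
    subst this
    rw [← mul_assoc]
    exact mem_NN C n (c := c + 1) le_rfl hh

lemma PA_stab {m : ℕ} (hm : m ≤ n) : ∀ p ∈ PA C (n + 1), ∀ z ∈ NN C n m, p * z ∈ NN C n m := by
  induction m with
  | zero =>
    intro p hp
    refine NN_stab C n _ fun c hc h hh => ?_
    obtain rfl : c = 0 := by omega
    have : p * (vv C n 0 * h) = vv C n 0 * (p * h) := by simp [vv]
    rw [this]
    exact mem_NN C n le_rfl ((HH C n).mul_mem (PA_HH C n hp) hh)
  | succ m ih =>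
    have ih := ih (by omega)
    have hup := tt_up C n (m := m) (by omega)
    have ha : n - 1 - m + 1 < n + 1 := by omega
    refine fun p hp => PA_le C (n + 1) (lstab (NN C n (m + 1))) ?_ ?_ hp
    · intro ν
      refine NN_stab C n _ fun c hc h hh => ?_
      rcases Nat.lt_or_ge c (m + 1) with h1 | h1
      · exact NN_mono C n (Nat.le_succ m) (ih _ (Ee_PA C ν) _ (mem_NN C n (by omega) hh))
      · obtain rfl : c = m + 1 := by omega
        have h2 := (algRels C (n + 1)).taue _ ha (ν ∘ sp _ ha)
        rw [sp_sp] at h2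
        rw [vv, ← mul_assoc, ← mul_assoc, tt_eq C ha, ← h2, ← tt_eq C ha, mul_assoc, mul_assoc]
        exact hup _ (ih _ (Ee_PA C _) _ (mem_NN C n le_rfl hh))
    · intro b
      refine NN_stab C n _ fun c hc h hh => ?_
      rcases Nat.lt_or_ge c (m + 1) with h1 | h1
      · exact NN_mono C n (Nat.le_succ m) (ih _ (Xx_PA C b) _ (mem_NN C n (by omega) hh))
      · obtain rfl : c = m + 1 := by omega
        have h3 := taux_mem C _ ha (sp _ ha b)
        rw [Equiv.swap_apply_self] at h3
        have h4 : Xx C b * (vv C n (m + 1) * h) =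
            tt C (n + 1) (n - 1 - m) * (Xx C (sp _ ha b) * (vv C n m * h)) -
            (Tt C _ ha * Xx C (sp _ ha b) - Xx C b * Tt C _ ha) * (vv C n m * h) := by
          rw [vv, tt_eq C ha, sub_mul]
          simp only [mul_assoc]
          abel
        rw [h4]
        exact Submodule.sub_mem _ (hup _ (ih _ (Xx_PA C _) _ (mem_NN C n le_rfl hh)))
          (NN_mono C n (Nat.le_succ m) (ih _ h3 _ (mem_NN C n le_rfl hh)))

lemma T_stab {m : ℕ} (hm : m ≤ n) : ∀ b, n ≤ b + m → b < n → ∀ z ∈ NN C n m,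
    tt C (n + 1) b * z ∈ NN C n m := by
  induction m with
  | zero => intro b hb hb'; omega
  | succ m ih =>
    have ih := ih (by omega)
    have hup := tt_up C n (m := m) (by omega)
    have ha : n - 1 - m + 1 < n + 1 := by omega
    intro b hb hb'
    refine NN_stab C n _ fun c hc h hh => ?_
    rcases Nat.lt_or_ge c (m + 1) with h1 | h1
    · rcases Nat.lt_or_ge b (n - m) with h2 | h2
      · obtain rfl : b = n - 1 - m := by omega
        exact hup _ (mem_NN C n (by omega) hh)
      · exact NN_mono C n (Nat.le_succ m) (ih b (by omega) hb' _ (mem_NN C n (by omega) hh))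
    · obtain rfl : c = m + 1 := by omega
      rcases Nat.lt_trichotomy b (n - m) with h2 | h2 | h2
      · obtain rfl : b = n - 1 - m := by omega
        rw [vv, ← mul_assoc, ← mul_assoc, mul_assoc, tt_eq C ha]
        exact PA_stab C n hm _ (tsq_mem C _ ha) _ (mem_NN C n (by omega) hh)
      · obtain ⟨m, rfl⟩ : ∃ m', m = m' + 1 := ⟨m - 1, by omega⟩
        obtain ⟨a, hna⟩ : ∃ a, n = a + m + 2 := ⟨n - m - 2, by omega⟩
        have e1 : n - 1 - (m + 1) = a := by omega
        have e2 : n - 1 - m = a + 1 := by omega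
        have e3 : b = a + 1 := by omega
        have q1 : a + 1 + 1 < n + 1 := by omega
        have q2 : a + 1 < n + 1 := by omega
        have hbr := braid_mem C a (n := n + 1) q1
        have h4 : tt C (n + 1) b * (vv C n (m + 1 + 1) * h) =
          (Tt C (a + 1) q1 * Tt C a q2 * Tt C (a + 1) q1 -
            Tt C a q2 * Tt C (a + 1) q1 * Tt C a q2) * (vv C n m * h) +
          tt C (n + 1) (n - 1 - (m + 1)) * (vv C n (m + 1) * (tt C (n + 1) a * h)) := by
          have h5 : vv C n m * tt C (n + 1) a = tt C (n + 1) a * vv C n m :=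
            (tt_vv C n (by omega)).symm
          rw [vv, vv, e1, e2, e3]
          rw [show tt C (n + 1) (a + 1) * vv C n m * (tt C (n + 1) a * h) =
            tt C (n + 1) (a + 1) * (vv C n m * tt C (n + 1) a) * h by simp only [mul_assoc], h5]
          rw [tt_eq C (l := a + 1) (by omega), tt_eq C (l := a) (by omega), sub_mul]
          simp only [mul_assoc]
          abel
        rw [h4]
        refine Submodule.add_mem _ (PA_stab C n hm _ hbr _ (mem_NN C n (by omega) hh)) ?_
        exact hup _ (mem_NN C n le_rfl ((HH C n).mul_mem (tt_HH C n (by omega)) hh))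
      · rw [vv, ← mul_assoc, ← mul_assoc, tt_comm C (Or.inr (by omega)), mul_assoc, mul_assoc]
        exact hup _ (ih b (by omega) hb' _ (mem_NN C n le_rfl hh))

lemma NN_top (z : Alg C (n + 1)) : z ∈ NN C n n := by
  have h1 : z ∈ lstab (NN C n n) := by
    refine alg_top C _ ?_ ?_ ?_ z
    · intro ν; exact PA_stab C n le_rfl _ (Ee_PA C ν)
    · intro ν; exact PA_stab C n le_rfl _ (Xx_PA C ν)
    · intro l h; rw [← tt_eq C h]; exact T_stab C n le_rfl l (by omega) (by omega)
  have h2 : (1 : Alg C (n + 1)) ∈ NN C n n := by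
    have := mem_NN C n (Nat.zero_le n) (HH C n).one_mem
    simpa [vv] using this
  simpa using h1 1 h2

lemma HH_span (z : Alg C (n + 1)) (hz : z ∈ HH C n) : z ∈ Submodule.span k
    {z | ∃ (s : Alg C n) (p : ℕ) (j : I), z = iota C n s * Xx C (Fin.last n) ^ p * eps C n j} := by
  set W := Submodule.span k
    {z | ∃ (s : Alg C n) (p : ℕ) (j : I), z = iota C n s * Xx C (Fin.last n) ^ p * eps C n j}
  have hW : ∀ s p j, iota C n s * Xx C (Fin.last n) ^ p * eps C n j ∈ W := fun s p j =>
    Submodule.subset_span ⟨s, p, j, rfl⟩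
  have key : ∀ y, (∀ s p j, y * (iota C n s * Xx C (Fin.last n) ^ p * eps C n j) ∈ W) →
      y ∈ lstab W := by
    intro y hy
    have : W ≤ W.comap (LinearMap.mulLeft k y) := by
      refine Submodule.span_le.mpr ?_
      rintro z ⟨s, p, j, rfl⟩
      exact hy s p j
    exact this
  have hio : ∀ r, iota C n r ∈ lstab W := by
    intro r
    refine key _ fun s p j => ?_
    rw [← mul_assoc, ← mul_assoc, ← map_mul]
    exact hW _ _ _
  have hep : ∀ i, eps C n i ∈ lstab W := by
    intro i
    refine key _ fun s p j => ?_
    have h1 : eps C n i * (iota C n s * Xx C (Fin.last n) ^ p * eps C n j) =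
      iota C n s * Xx C (Fin.last n) ^ p * (eps C n i * eps C n j) := by
      have h2 : Commute (eps C n i) (iota C n s) := (iota_eps C n i s).symm
      have h3 : Commute (eps C n i) (Xx C (Fin.last n) ^ p) :=
        Commute.pow_right (X_eps C n i _).symm p
      rw [← mul_assoc, (h2.mul_right h3).eq, mul_assoc]
    rw [h1, eps_mul]
    split_ifs
    · exact hW _ _ _
    · rw [mul_zero]; exact W.zero_mem
  have h1 : HH C n ≤ lstab W := by
    refine Algebra.adjoin_le ?_
    rintro z ((⟨ν, rfl⟩ | ⟨a, rfl⟩) | ⟨l, hl, rfl⟩)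
    · rw [Ee_eq]
      exact (lstab W).mul_mem (hio _) (hep _)
    · refine Fin.lastCases ?_ (fun a => ?_) a
      · refine key _ fun s p j => ?_
        have : Xx C (Fin.last n) * (iota C n s * Xx C (Fin.last n) ^ p * eps C n j) =
            iota C n s * Xx C (Fin.last n) ^ (p + 1) * eps C n j := by
          rw [← mul_assoc, ← mul_assoc, ← iota_xlast, pow_succ', mul_assoc, mul_assoc, mul_assoc, mul_assoc]
        rw [this]; exact hW _ _ _
      · rw [← iota_Xx]; exact hio _
    · rw [tt_eq C (by omega), ← iota_Tt C n l hl]; exact hio _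
  have h2 : (1 : Alg C (n + 1)) ∈ W := by
    rw [← eps_sum]
    refine Submodule.sum_mem _ fun j _ => ?_
    have := hW 1 0 j
    simpa using this
  simpa using h1 hz 1 h2

/-- The spanning statement. -/
lemma span_eps (i : I) (z : Alg C (n + 1)) :
    z * eps C n i ∈ LinearMap.range (asm (fun a : Fin (n + 1) => vv C n a) (phiA C n i) (Xx C (Fin.last n))) := by
  set W := LinearMap.range (asm (fun a : Fin (n + 1) => vv C n a) (phiA C n i) (Xx C (Fin.last n)))
  have h1 : ∀ c ≤ n, ∀ h ∈ HH C n, (vv C n c * h) * eps C n i ∈ W := by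
    intro c hc h hh
    have h2 := HH_span C n h hh
    have : Submodule.span k
      {z | ∃ (s : Alg C n) (p : ℕ) (j : I), z = iota C n s * Xx C (Fin.last n) ^ p * eps C n j} ≤
      W.comap ((LinearMap.mulRight k (eps C n i)).comp (LinearMap.mulLeft k (vv C n c))) := by
      refine Submodule.span_le.mpr ?_
      rintro z ⟨s, p, j, rfl⟩
      change vv C n c * (iota C n s * Xx C (Fin.last n) ^ p * eps C n j) * eps C n i ∈ W
      rw [mul_assoc, mul_assoc, eps_mul]
      split_ifs with hij
      · subst hij
        refine ⟨Pi.single ⟨c, by omega⟩ (Polynomial.monomial p s), ?_⟩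
        rw [asm_apply, Finset.sum_eq_single ⟨c, by omega⟩]
        · rw [Pi.single_eq_same, evl_monomial, phiA_apply]
          have h3 : Commute (eps C n j) (Xx C (Fin.last n) ^ p) :=
            Commute.pow_right (X_eps C n j _).symm p
          rw [mul_assoc, mul_assoc, h3.eq]
        · intro b _ hb
          rw [Pi.single_eq_of_ne hb]; simp
        · simp
      · rw [mul_zero, mul_zero]; exact W.zero_mem
    exact this h2
  have h2 : NN C n n ≤ W.comap (LinearMap.mulRight k (eps C n i)) := by
    refine Submodule.span_le.mpr ?_
    rintro z ⟨c, hc, h, hh, rfl⟩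
    exact h1 c hc h hh
  exact h2 (NN_top C n z)

end KLR


namespace KLR

variable {k : Type} [Field k] {I : Type} [Fintype I] [DecidableEq I] (C : CartanDatum k I)

/-! ### Independence and faithfulness -/

section indep
variable {K : Type} [Field K] [Algebra k K] (V : VarField k K)

@[simp] lemma rho_Ee (n : ℕ) (ν) : rho C V n (Ee C ν) = eeL ν := by simp [rho]
@[simp] lemma rho_Xx (n : ℕ) (a) : rho C V n (Xx C a) = xL V a.val := by simp [rho]
@[simp] lemma rho_Tt (n : ℕ) (l h) : rho C V n (Tt C l h) = tL C V l h := by simp [rho]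

lemma rho_eS (n : ℕ) (s : Finset (Fin n → I)) (g : LL I K n) (μ) :
    rho C V n (eS C s) g μ = if μ ∈ s then g μ else 0 := by
  simp [eS, map_sum, LinearMap.sum_apply, Finset.sum_apply]

/-- The operator `T ↦ T x_n - x_b T`. -/
def DD (n b : ℕ) : Module.End k (LL I K (n + 1)) →ₗ[k] Module.End k (LL I K (n + 1)) :=
  LinearMap.mulRight k (xL V n) - LinearMap.mulLeft k (xL V b)

lemma DD_apply (n b : ℕ) (T : Module.End k (LL I K (n + 1))) :
    DD V n b T = T * xL V n - xL V b * T := rfl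

/-- Iterated `DD`. -/
def Del (n : ℕ) : ℕ → Module.End k (LL I K (n + 1)) →ₗ[k] Module.End k (LL I K (n + 1))
  | 0 => LinearMap.id
  | m + 1 => (DD V n (n - m)).comp (Del n m)

lemma tL_xL_far {n : ℕ} (l : ℕ) (h : l + 1 < n) (b : ℕ) (h1 : b ≠ l) (h2 : b ≠ l + 1) :
    tL C V l h * xL V b = xL V b * tL C V l h := by
  refine LinearMap.ext fun g => funext fun μ => ?_
  simp only [Module.End.mul_apply, xL_apply, tL_apply, map_mul, V.sg_x]
  rw [Equiv.swap_apply_of_ne_of_ne h1 h2]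
  ring

lemma Del_tL (n m a : ℕ) (h : a + 1 < n + 1) (hm : a + 1 + m ≤ n) (T) :
    Del V n m (tL C V a h * T) = tL C V a h * Del V n m T := by
  induction m with
  | zero => rfl
  | succ m ih =>
    rw [Del, LinearMap.comp_apply, ih (by omega), LinearMap.comp_apply, DD_apply, DD_apply, mul_sub,
      ← mul_assoc (xL V (n - m)), ← tL_xL_far C V a h (n - m) (by omega) (by omega),
      mul_assoc, mul_assoc]

lemma DD_tL (n a : ℕ) (h : a + 1 < n + 1) (T) :
    DD V n (a + 1) (tL C V a h * T) = mulL (AF C V a h) * sL V a h * DD V n a T +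
      mulL (BF V a h) * DD V n (a + 1) T := by
  have h1 : xL V (a + 1) * (mulL (AF C V a h) * sL V a h) =
      mulL (AF C V a h) * sL V a h * xL V a := by
    refine LinearMap.ext fun g => funext fun μ => ?_
    simp only [Module.End.mul_apply, xL_apply, mulL_apply, sL_apply, map_mul, V.sg_x]
    rw [Equiv.swap_apply_left]; ring
  have h2 : xL V (a + 1) * (mulL (BF V a h) : Module.End k (LL I K (n + 1))) =
      mulL (BF V a h) * xL V (a + 1) := by
    refine LinearMap.ext fun g => funext fun μ => ?_
    simp only [Module.End.mul_apply, xL_apply, mulL_apply]; ring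
  rw [DD_apply, DD_apply, DD_apply, tL, mul_sub, mul_sub, ← mul_assoc _ (xL V a), ← h1,
    ← mul_assoc _ (xL V (a + 1)), ← h2]
  simp only [add_mul, mul_add, mul_assoc]
  abel

lemma Del_key (n m : ℕ) (hm : m ≤ n) (F : Module.End k (LL I K (n + 1)))
    (hF : F * xL V n = xL V n * F) :
    (Del V n m (rho C V (n + 1) (vv C n m) * F) * xL V n =
      xL V (n - m) * Del V n m (rho C V (n + 1) (vv C n m) * F)) ∧
    (Del V n m (rho C V (n + 1) (vv C n m) * F) = 0 → F = 0) := by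
  induction m with
  | zero => simpa [vv, Del] using hF
  | succ m ih =>
    obtain ⟨ih1, ih2⟩ := ih (by omega)
    set G := Del V n m (rho C V (n + 1) (vv C n m) * F) with hG
    obtain ⟨a, ha⟩ : ∃ a, n = a + 1 + m := ⟨n - 1 - m, by omega⟩
    have e1 : n - 1 - m = a := by omega
    have e2 : n - m = a + 1 := by omega
    have e3 : n - (m + 1) = a := by omega
    have q : a + 1 < n + 1 := by omega
    have h0 : DD V n (a + 1) G = 0 := by rw [DD_apply, ih1, e2, sub_self]
    have h1 : Del V n (m + 1) (rho C V (n + 1) (vv C n (m + 1)) * F) =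
        mulL (AF C V a q) * sL V a q * DD V n a G := by
      rw [Del, LinearMap.comp_apply, vv, e1, e2, tt_eq C q, map_mul (rho C V (n + 1)), rho_Tt, mul_assoc,
        Del_tL C V n m a q (by omega), DD_tL, ← hG, h0, mul_zero, add_zero]
    have h2 : DD V n a G = xL V (a + 1) * G - xL V a * G := by rw [DD_apply, ih1, e2]
    rw [h1, h2, e3]
    constructor
    · have ih3 : ∀ g μ, G (xL V n g) μ = V.x (a + 1) * G g μ := by
        intro g μ
        have := congrFun (DFunLike.congr_fun ih1 g) μ
        rw [e2] at this
        exact this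
      refine LinearMap.ext fun g => funext fun μ => ?_
      simp only [Module.End.mul_apply, xL_apply, mulL_apply, sL_apply, map_mul, V.sg_x,
        LinearMap.sub_apply, Pi.sub_apply, map_sub, ih3]
      rw [Equiv.swap_apply_left, Equiv.swap_apply_right]; ring
    · intro hz
      apply ih2
      refine LinearMap.ext fun g => funext fun μ => ?_
      have hz' := congrFun (DFunLike.congr_fun hz g) (μ ∘ sp a q)
      simp only [Module.End.mul_apply, xL_apply, mulL_apply, sL_apply, sp_sp,
        LinearMap.sub_apply, Pi.sub_apply, LinearMap.zero_apply, Pi.zero_apply] at hz'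
      rcases mul_eq_zero.mp hz' with h | h
      · exact absurd h (PP_ne C V _ _ (by omega))
      · rw [map_eq_zero, ← sub_mul] at h
        rcases mul_eq_zero.mp h with h | h
        · exact absurd (V.x_inj (sub_eq_zero.mp h)) (by omega)
        · exact h

lemma Del_kill (n m c : ℕ) (hm : m ≤ n) (hc : c < m) (F : Module.End k (LL I K (n + 1)))
    (hF : F * xL V n = xL V n * F) : Del V n m (rho C V (n + 1) (vv C n c) * F) = 0 := by
  induction m with
  | zero => omega
  | succ m ih =>
    rw [Del, LinearMap.comp_apply]
    rcases Nat.lt_or_ge c m with h | h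
    · rw [ih (by omega) h, map_zero]
    · obtain rfl : c = m := by omega
      rw [DD_apply, (Del_key C V n c (by omega) F hF).1, sub_self]

lemma indepF (n : ℕ) (F : ℕ → Module.End k (LL I K (n + 1)))
    (hF : ∀ c, F c * xL V n = xL V n * F c)
    (hs : ∑ c : Fin (n + 1), rho C V (n + 1) (vv C n c) * F c = 0) : ∀ c ≤ n, F c = 0 := by
  have key : ∀ j ≤ n, ∀ c ≤ n, n ≤ c + j → F c = 0 := by
    intro j
    induction j using Nat.strong_induction_on with
    | _ j ih =>
      intro hj c hc hcj
      rcases Nat.lt_or_ge n (c + j) with h | h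
      · exact ih (n - c) (by omega) (by omega) c hc (by omega)
      · refine (Del_key C V n c hc (F c) (hF c)).2 ?_
        have h1 := congrArg (Del V n c) hs
        rw [map_sum, map_zero, Finset.sum_eq_single (⟨c, by omega⟩ : Fin (n + 1))] at h1
        · exact h1
        · intro b _ hb
          have hb' : b.val ≠ c := fun h => hb (Fin.ext h)
          rcases Nat.lt_or_ge b.val c with h2 | h2
          · exact Del_kill C V n c b hc h2 _ (hF _)
          · have := b.isLt
            rw [ih (n - b) (by omega) (by omega) b (by omega) (by omega)]
            simp
        · simp
  exact fun c hc => key n le_rfl c hc (by omega)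

/-- Restriction. -/
def res (n : ℕ) (i : I) : LL I K (n + 1) →ₗ[k] LL I K n where
  toFun g ν := g (Fin.snoc ν i : Fin (n + 1) → I)
  map_add' _ _ := rfl
  map_smul' _ _ := rfl

lemma res_apply (n : ℕ) (i : I) (g : LL I K (n + 1)) (ν) :
    res (k := k) n i g ν = g (Fin.snoc ν i : Fin (n + 1) → I) := rfl

lemma snoc_comp_sp {n : ℕ} (l : ℕ) (h : l + 1 < n) (μ : Fin n → I) (i : I) :
    (Fin.snoc μ i : Fin (n + 1) → I) ∘ sp l (Nat.lt_succ_of_lt h) = Fin.snoc (μ ∘ sp l h) i := by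
  rw [← Fin.snoc_init_self ((Fin.snoc μ i : Fin (n + 1) → I) ∘ sp l (Nat.lt_succ_of_lt h)),
    init_comp_sp l h, last_comp_sp l h]
  simp

lemma snoc_lt {n : ℕ} (l : ℕ) (h : l < n) (μ : Fin n → I) (i : I) :
    (Fin.snoc μ i : Fin (n + 1) → I) ⟨l, Nat.lt_succ_of_lt h⟩ = μ ⟨l, h⟩ :=
  Fin.snoc_castSucc (α := fun _ => I) i μ ⟨l, h⟩

lemma res_rho (n : ℕ) (i : I) (s : Alg C n) (g : LL I K (n + 1)) :
    res (k := k) n i (rho C V (n + 1) (iota C n s) g) = rho C V n s (res (k := k) n i g) := by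
  revert g
  let S : Subalgebra k (Alg C n) :=
    { carrier := {s | ∀ g, res (k := k) n i (rho C V (n + 1) (iota C n s) g) = rho C V n s (res (k := k) n i g)}
      mul_mem' := by
        intro a b ha hb g
        simp only [Set.mem_ofPred_eq] at ha hb
        rw [map_mul, map_mul, map_mul, Module.End.mul_apply, Module.End.mul_apply, ha, hb]
      add_mem' := by
        intro a b ha hb g
        simp only [Set.mem_ofPred_eq] at ha hb
        rw [map_add, map_add, map_add, LinearMap.add_apply, LinearMap.add_apply, map_add, ha, hb]
      algebraMap_mem' := by
        intro c g
        rw [AlgHom.commutes, AlgHom.commutes, AlgHom.commutes]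
        rfl }
  refine alg_top C S ?_ ?_ ?_ s
  · intro ν g
    rw [iota_Ee, rho_Ee]
    funext μ
    rw [res_apply, rho_eS, eeL_apply, res_apply]
    simp [mem_sInit]
  · intro a g
    rw [iota_Xx, rho_Xx, rho_Xx]
    rfl
  · intro l h g
    rw [iota_Tt, rho_Tt, rho_Tt]
    funext μ
    rw [res_apply, tL_apply, tL_apply, res_apply, res_apply, snoc_comp_sp, snoc_lt, snoc_lt]

/-- Semilinear twist. -/
def sgL (n : ℕ) (e : Equiv.Perm ℕ) (g : LL I K n) : LL I K n := fun ν => V.sg e (g ν)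

lemma sgL_rho (n m : ℕ) (hm : n ≤ m) (s : Alg C n) (g : LL I K n) :
    sgL V n (Equiv.swap n m) (rho C V n s g) = rho C V n s (sgL V n (Equiv.swap n m) g) := by
  revert g
  let S : Subalgebra k (Alg C n) :=
    { carrier := {s | ∀ g, sgL V n (Equiv.swap n m) (rho C V n s g) = rho C V n s (sgL V n (Equiv.swap n m) g)}
      mul_mem' := by
        intro a b ha hb g
        simp only [Set.mem_ofPred_eq] at ha hb
        rw [map_mul, Module.End.mul_apply, Module.End.mul_apply, ha, hb]
      add_mem' := by
        intro a b ha hb g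
        simp only [Set.mem_ofPred_eq] at ha hb
        rw [map_add, LinearMap.add_apply, LinearMap.add_apply, ← ha, ← hb]
        funext ν
        simp [sgL]
      algebraMap_mem' := by
        intro c g
        rw [AlgHom.commutes]
        funext ν
        simp [sgL, Module.algebraMap_end_apply] }
  have hfix : ∀ a < n, Equiv.swap n m a = a := fun a ha =>
    Equiv.swap_apply_of_ne_of_ne (by omega) (by omega)
  refine alg_top C S ?_ ?_ ?_ s
  · intro ν g
    rw [rho_Ee]
    funext μ
    simp only [sgL, eeL_apply]
    split_ifs <;> simp
  · intro a g
    rw [rho_Xx]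
    funext μ
    simp only [sgL, xL_apply, map_mul, V.sg_x]
    rw [hfix _ a.isLt]
  · intro l h g
    rw [rho_Tt]
    funext μ
    simp only [sgL, tL_apply, map_mul, map_add, map_PP, map_BB, V.sg_x, V.sg_mul]
    rw [hfix l (by omega), hfix (l + 1) h]
    have : Equiv.swap n m * Equiv.swap l (l + 1) = Equiv.swap l (l + 1) * Equiv.swap n m := by
      have hd : Equiv.Perm.Disjoint (Equiv.swap n m) (Equiv.swap l (l + 1)) := by
        intro x
        by_cases hx : x < n
        · left; exact hfix x hx
        · right; exact Equiv.swap_apply_of_ne_of_ne (by omega) (by omega)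
      exact hd.commute
    rw [this]

lemma vand (n : ℕ) (f : Polynomial (Alg C n))
    (hf : ∀ (g : LL I K n) ν, ∑ p ∈ f.support, V.x n ^ p * (rho C V n (f.coeff p) g) ν = 0) (p : ℕ) :
    rho C V n (f.coeff p) = 0 := by
  refine LinearMap.ext fun g => funext fun ν => ?_
  let q : Polynomial K := ∑ p ∈ f.support, Polynomial.monomial p ((rho C V n (f.coeff p) g) ν)
  have hroot : ∀ m, n ≤ m → q.eval (V.x m) = 0 := by
    intro m hm
    have h1 := congrArg (V.sg (Equiv.swap n m)) (hf (sgL V n (Equiv.swap n m) g) ν)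
    simp only [map_sum, map_mul, map_pow, V.sg_x, map_zero, Equiv.swap_apply_left] at h1
    rw [← h1]
    simp only [q, Polynomial.eval_finsetSum, Polynomial.eval_monomial]
    refine Finset.sum_congr rfl fun p _ => ?_
    rw [mul_comm]
    congr 1
    rw [← sgL_rho C V n m hm]
    simp only [sgL]
    rw [V.sg_mul, Equiv.swap_mul_self, V.sg_one]
  have hq : q = 0 := by
    refine Polynomial.eq_zero_of_infinite_isRoot q ?_
    refine Set.Infinite.mono (s := V.x '' Set.Ici n) ?_ ?_
    · rintro _ ⟨m, hm, rfl⟩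
      exact hroot m hm
    · exact (Set.Ici_infinite n).image V.x_inj.injOn
  by_cases hp : p ∈ f.support
  · have h2 := congrArg (fun r => Polynomial.coeff r p) hq
    simp only [q, Polynomial.finsetSum_coeff, Polynomial.coeff_monomial, Polynomial.coeff_zero] at h2
    rw [Finset.sum_ite_eq' f.support p (fun p => (rho C V n (f.coeff p) g) ν), if_pos hp] at h2
    simpa using h2
  · rw [Polynomial.notMem_support_iff.mp hp]; simp

lemma evl_eq {S B : Type} [Ring S] [Algebra k S] [Ring B] [Algebra k B]
    (φ : S →ₗ[k] B) (x : B) (f : Polynomial S) :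
    evl φ x f = ∑ p ∈ f.support, φ (f.coeff p) * x ^ p := rfl

lemma indepA (n : ℕ) (i : I) (hinj : Function.Injective (rho C V n)) (f)
    (hf : rho C V (n + 1) (asm (fun a : Fin (n + 1) => vv C n a) (phiA C n i)
      (Xx C (Fin.last n)) f) = 0) : f = 0 := by
  have hcomm : ∀ g, Commute (evl (phiA C n i) (Xx C (Fin.last n)) g) (Xx C (Fin.last n)) := by
    intro g
    rw [evl_eq]
    refine Commute.sum_left _ _ _ fun p _ => ?_
    refine Commute.mul_left ?_ (Commute.pow_left (Commute.refl _) _)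
    rw [phiA_apply]
    exact Commute.mul_left (iota_xlast C n _) (X_eps C n i _).symm
  have h1 := indepF C V n (fun c => if h : c < n + 1 then
    rho C V (n + 1) (evl (phiA C n i) (Xx C (Fin.last n)) (f ⟨c, h⟩)) else 0) ?_ ?_
  · funext c
    have hc := h1 c.val (by omega)
    simp only [Fin.is_lt, dif_pos] at hc
    ext p
    rw [Pi.zero_apply, Polynomial.coeff_zero]
    apply hinj
    rw [map_zero]
    refine vand C V n (f c) ?_ p
    intro g ν
    let g' : LL I K (n + 1) := fun μ => g (Fin.init μ)
    have hg' : res (k := k) n i g' = g := by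
      funext μ; rw [res_apply]; simp [g']
    have h2 := congrFun (congrArg (res (k := k) n i) (DFunLike.congr_fun hc g')) ν
    simp only [LinearMap.zero_apply, map_zero, Pi.zero_apply] at h2
    rw [← h2, evl_eq, map_sum, LinearMap.sum_apply, map_sum, Finset.sum_apply]
    refine Finset.sum_congr rfl fun p hp => ?_
    clear hp
    have h3 : Commute (phiA C n i ((f c).coeff p)) (Xx C (Fin.last n) ^ p) := by
      rw [phiA_apply]
      exact Commute.pow_right (Commute.mul_left (iota_xlast C n _) (X_eps C n i _).symm) p
    have h4 : ∀ g : LL I K (n + 1), rho C V (n + 1) (Xx C (Fin.last n) ^ p) g (Fin.snoc ν i) =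
        V.x n ^ p * g (Fin.snoc ν i) := by
      intro g
      clear h3
      rw [map_pow, rho_Xx]
      induction p generalizing g with
      | zero => simp
      | succ p ih =>
        rw [pow_succ', pow_succ', Module.End.mul_apply, xL_apply, ih]
        simp; ring
    have h5 : res (k := k) n i (rho C V (n + 1) (eps C n i) g') = g := by
      rw [← hg']
      funext μ
      rw [res_apply, eps, rho_eS, res_apply, if_pos]
      rw [mem_sLast]; simp
    have h6 : rho C V (n + 1) (phiA C n i ((f c).coeff p)) g' (Fin.snoc ν i) =
        rho C V n ((f c).coeff p) g ν := by
      rw [← h5, ← res_rho, phiA_apply, map_mul, Module.End.mul_apply, res_apply]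
    have h7 := h4 (rho C V (n + 1) (phiA C n i ((f c).coeff p)) g')
    rw [h6, ← Module.End.mul_apply, ← map_mul, ← h3.eq] at h7
    exact h7.symm
  · intro c
    by_cases h : c < n + 1
    · have := congrArg (rho C V (n + 1)) (hcomm (f ⟨c, h⟩)).eq
      rw [map_mul, map_mul, rho_Xx] at this
      rw [Fin.val_last] at this
      simp only [dif_pos h]
      exact this
    · simp only [dif_neg h]
      rw [zero_mul, mul_zero]
  · refine Eq.trans ?_ hf
    rw [asm_apply, map_sum]
    refine Finset.sum_congr rfl fun c _ => ?_
    rw [map_mul]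
    simp only [Fin.is_lt, dif_pos]

lemma rho_inj (n : ℕ) : Function.Injective (rho C V n) := by
  induction n with
  | zero =>
    have h1 : ∀ z : Alg C 0, z ∈ (⊥ : Subalgebra k (Alg C 0)) := by
      refine alg_top C _ ?_ ?_ ?_
      · intro ν
        have := (algRels C 0).esum
        rw [Fintype.sum_subsingleton _ ν] at this
        rw [this]; exact Subalgebra.one_mem _
      · intro a; exact a.elim0
      · intro l h; omega
    rw [injective_iff_map_eq_zero]
    intro z hz
    obtain ⟨c, rfl⟩ := Algebra.mem_bot.mp (h1 z)
    rw [AlgHom.commutes] at hz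
    have h2 := congrFun (DFunLike.congr_fun hz (fun _ => 1)) Fin.elim0
    simp only [Module.algebraMap_end_apply, Pi.smul_apply, LinearMap.zero_apply, Pi.zero_apply] at h2
    rw [smul_eq_zero] at h2
    rcases h2 with h2 | h2
    · rw [h2, map_zero]
    · exact absurd h2 one_ne_zero
  | succ n ih =>
    rw [injective_iff_map_eq_zero]
    intro z hz
    rw [← mul_one z, ← eps_sum C n, Finset.mul_sum]
    refine Finset.sum_eq_zero fun i _ => ?_
    obtain ⟨f, hf⟩ := span_eps C n i z
    have hf0 : f = 0 := by
      refine indepA C V n i ih f ?_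
      rw [hf, map_mul, hz, zero_mul]
    rw [← hf, hf0, map_zero]

end indep

/-- The independence statement. -/
lemma asm_inj (n : ℕ) (i : I) : Function.Injective
    (asm (fun a : Fin (n + 1) => vv C n a) (phiA C n i) (Xx C (Fin.last n))) := by
  rw [injective_iff_map_eq_zero]
  intro f hf
  exact indepA C (ratField k) n i (rho_inj C _ n) f (by rw [hf, map_zero])

end KLR


namespace KLR

variable {k : Type} [Field k] {I : Type} [Fintype I] [DecidableEq I] (C : CartanDatum k I)

/-! ### Transfer to `R(β)` -/

lemma Rels.map {C : CartanDatum k I} {n : ℕ} {A B : Type} [Ring A] [Algebra k A] [Ring B]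
    [Algebra k B] {e : (Fin n → I) → A} {x : Fin n → A}
    {t : ∀ l : ℕ, l + 1 < n → A} (H : Rels C e x t) (f : A →ₐ[k] B) :
    Rels C (fun ν => f (e ν)) (fun a => f (x a)) (fun l h => f (t l h)) := by
  constructor
  · intro ν ν'
    have := congrArg f (H.ee ν ν')
    simpa only [apply_ite f, map_mul, map_zero] using this
  · have := congrArg f H.esum
    simpa only [map_sum, map_one] using this
  · intro a b
    have := congrArg f (H.xx a b)
    simpa only [map_mul] using this
  · intro a b
    have := congrArg f (H.xe a b)
    simpa only [map_mul] using this
  · intro l h ν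
    have := congrArg f (H.taue l h ν)
    simpa only [map_mul] using this
  · intro l h l' h' hh
    have := congrArg f (H.tautau l h l' h' hh)
    simpa only [map_mul] using this
  · intro l h ν
    have := congrArg f (H.tausq l h ν)
    simpa only [map_mul, map_pow, map_Qel] using this
  · intro l h m ν
    have := congrArg f (H.taux l h m ν)
    simpa only [apply_ite f, map_mul, map_sub, map_neg, map_zero] using this
  · intro l h ν
    have := congrArg f (H.braid l h ν)
    simpa only [apply_ite f, map_mul, map_sub, map_neg, map_zero, map_Qdiff] using this

lemma alg_hom_ext {n : ℕ} {A : Type} [Ring A] [Algebra k A] {f g : Alg C n →ₐ[k] A}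
    (he : ∀ ν, f (Ee C ν) = g (Ee C ν)) (hx : ∀ a, f (Xx C a) = g (Xx C a))
    (ht : ∀ l h, f (Tt C l h) = g (Tt C l h)) (z : Alg C n) : f z = g z :=
  alg_top C (AlgHom.equalizer f g) he hx ht z

lemma algLift_map {n : ℕ} {A : Type} [Ring A] [Algebra k A] (f : Alg C n →ₐ[k] A) (z : Alg C n) :
    algLift ((algRels C n).map f) z = f z :=
  alg_hom_ext C (by simp) (by simp) (by simp) z

lemma content_comp {n : ℕ} (ν : Fin n → I) (σ : Equiv.Perm (Fin n)) :
    content (ν ∘ σ) = content ν := by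
  funext i
  unfold content
  refine Finset.card_equiv σ ?_
  intro a
  simp

lemma mem_seqs {n : ℕ} (β : I → ℕ) (ν : Fin n → I) : ν ∈ seqs β n ↔ content ν = β := by
  simp [seqs]

lemma eIdem_central (n : ℕ) (β : I → ℕ) (z : Alg C n) : z * eIdem C n β = eIdem C n β * z := by
  have h : z ∈ Subalgebra.centralizer k {eIdem C n β} := by
    refine alg_top C _ ?_ ?_ ?_ z
    · intro ν
      rw [Subalgebra.mem_centralizer_iff]
      rintro _ rfl
      change eS C _ * _ = _ * eS C _
      rw [eS_mul_Ee, Ee_mul_eS]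
    · intro a
      rw [Subalgebra.mem_centralizer_iff]
      rintro _ rfl
      exact (X_eS C _ a).symm
    · intro l h
      rw [Subalgebra.mem_centralizer_iff]
      rintro _ rfl
      refine (T_eS C _ _ l h ?_).symm
      intro ν
      rw [mem_seqs, mem_seqs, content_comp]
  rw [Subalgebra.mem_centralizer_iff] at h
  exact (h _ rfl).symm

lemma eIdem_sq (n : ℕ) (β : I → ℕ) : eIdem C n β * eIdem C n β = eIdem C n β := by
  change eS C _ * eS C _ = eS C _
  rw [eS_mul_eS, Finset.inter_self]

lemma toB_eIdem (n : ℕ) (β : I → ℕ) : toB C (β := β) (eIdem C n β) = 1 := by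
  have := RingQuot.mkAlgHom_rel k (URel.unit (C := C) (n := n) (β := β))
  rw [map_one, ← toB_mk] at this
  rw [← this, map_sum]; rfl

lemma exists_corner (A : Type) [Ring A] [Algebra k A] (E : A) (hc : ∀ z, z * E = E * z)
    (h2 : E * E = E) : ∃ (A' : Type) (_ : Ring A') (_ : Algebra k A') (f : A →ₐ[k] A'),
      f E = 1 ∧ ∀ r, f r = 0 → r * E = 0 := by
  let M : Submodule A A := Submodule.span A {E}
  refine ⟨Module.End k M, inferInstance, inferInstance, Algebra.lsmul k k M, ?_, ?_⟩
  · ext ⟨m, hm⟩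
    obtain ⟨c, rfl⟩ := Submodule.mem_span_singleton.mp hm
    change E * (c * E) = c * E
    rw [← hc, mul_assoc, h2]
  · intro r h
    have h2 := DFunLike.congr_fun h ⟨E, Submodule.subset_span rfl⟩
    exact congrArg Subtype.val h2

lemma toB_ker (n : ℕ) (β : I → ℕ) (r : Alg C n) (hr : toB C (β := β) r = 0) :
    r * eIdem C n β = 0 := by
  obtain ⟨A', _, _, L, h1, h2⟩ := exists_corner (k := k) (Alg C n) _ (eIdem_central C n β) (eIdem_sq C n β)
  have h := bLift_toB ((algRels C n).map L) (β := β) ?_ r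
  · rw [hr, map_zero, algLift_map] at h
    exact h2 _ h.symm
  · rw [← map_sum]
    exact h1

lemma content_init {n : ℕ} (μ : Fin (n + 1) → I) :
    content μ = addA (content (Fin.init μ)) (μ (Fin.last n)) := by
  funext j
  simp only [content, addA, Finset.card_filter]
  rw [Fin.sum_univ_castSucc]
  simp only [Fin.init, eq_comm]

lemma addA_inj {β γ : I → ℕ} {i : I} (h : addA β i = addA γ i) : β = γ := by
  funext j
  have := congrFun h j
  simp only [addA] at this
  omega

lemma eR_eq (n : ℕ) (β : I → ℕ) (i : I) : eR C n β i = iota C n (eIdem C n β) * eps C n i := by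
  refine ext_e C fun μ => ?_
  change eS C _ * _ = _
  rw [eS_mul_Ee, mul_assoc, eps, eS_mul_Ee, eIdem, map_sum]
  simp only [iota_Ee, mem_sLast, Finset.mem_filter, mem_seqs, content_init]
  by_cases h : μ (Fin.last n) = i
  · rw [if_pos h, Finset.sum_mul]
    simp only [eS_mul_Ee, mem_sInit, Finset.sum_ite_eq, mem_seqs]
    subst h
    simp only [and_true]
    exact if_congr ⟨addA_inj, fun h => by rw [h]⟩ rfl rfl
  · rw [if_neg h, mul_zero, if_neg (fun h' => h h'.2)]

/-- A non-unital algebra map as a linear map. -/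
def nl {S B : Type} [Ring S] [Algebra k S] [Ring B] [Algebra k B] (φ : S →ₙₐ[k] B) : S →ₗ[k] B where
  toFun := φ
  map_add' := map_add φ
  map_smul' := map_smul φ

@[simp] lemma nl_apply {S B : Type} [Ring S] [Algebra k S] [Ring B] [Algebra k B] (φ : S →ₙₐ[k] B) (s) :
  nl φ s = φ s := rfl

lemma iota_eR (n : ℕ) (β : I → ℕ) (i : I) (s) :
    iota C n s * eR C n β i = eR C n β i * iota C n s := by
  rw [eR_eq, ← mul_assoc, ← map_mul, eIdem_central, map_mul, mul_assoc, iota_eps, mul_assoc]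

lemma eR_sq (n : ℕ) (β : I → ℕ) (i : I) : eR C n β i * eR C n β i = eR C n β i := by
  change eS C _ * eS C _ = eS C _
  rw [eS_mul_eS, Finset.inter_self]

lemma Ee_snoc (n : ℕ) (ν : Fin n → I) (i : I) :
    Ee C (Fin.snoc (α := fun _ => I) ν i) = iota C n (Ee C ν) * eps C n i := by
  rw [Ee_eq]; simp

section upR
variable {C}
variable {n : ℕ} {β : I → ℕ} {i : I} {φ0 : bAlg C n β →ₙₐ[k] bAlg C (n + 1) (addA β i)}

lemma upR_one (h0 : IsUpRb C i φ0) : φ0 1 = toB C (eR C n β i) := by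
  rw [← toB_eIdem, eR_eq]
  simp only [eIdem, map_sum]
  rw [Finset.sum_mul, map_sum]
  exact Finset.sum_congr rfl fun ν _ => by rw [h0.1, Ee_snoc]

lemma upR_toB (h0 : IsUpRb C i φ0) (s : Alg C n) :
    φ0 (toB C s) = toB C (iota C n s * eR C n β i) := by
  let S : Subalgebra k (Alg C n) :=
    { carrier := {s | φ0 (toB C s) = toB C (iota C n s * eR C n β i)}
      mul_mem' := by
        intro a b ha hb
        rw [Set.mem_ofPred_eq] at ha hb ⊢
        rw [map_mul, map_mul, ha, hb, ← map_mul, map_mul (iota C n)]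
        congr 1
        rw [mul_assoc, ← mul_assoc (eR C n β i), ← iota_eR, mul_assoc, eR_sq, mul_assoc]
      add_mem' := by
        intro a b ha hb
        rw [Set.mem_ofPred_eq] at ha hb ⊢
        rw [map_add, map_add, ha, hb, ← map_add, map_add (iota C n), add_mul]
      algebraMap_mem' := by
        intro c
        rw [Set.mem_ofPred_eq, Algebra.algebraMap_eq_smul_one, map_smul, map_smul, map_one, upR_one h0,
          map_smul, map_one, smul_mul_assoc, one_mul, map_smul] }
  refine alg_top C S ?_ ?_ ?_ s
  · intro ν
    change φ0 (toB C _) = toB C (iota C n _ * eR C n β i)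
    rw [eR_eq, ← mul_assoc, ← map_mul]
    have h1 : Ee C ν * eIdem C n β = if ν ∈ seqs β n then Ee C ν else 0 := Ee_mul_eS C _ _
    rw [h1]
    split_ifs with h
    · rw [h0.1, Ee_snoc]
    · rw [map_zero, zero_mul, map_zero, ← mul_one (toB C (Ee C ν)), ← toB_eIdem, ← map_mul, h1, if_neg h,
        map_zero, map_zero]
  · intro a
    change φ0 (toB C _) = toB C (iota C n _ * eR C n β i)
    rw [h0.2.1, iota_Xx]
  · intro l h
    change φ0 (toB C _) = toB C (iota C n _ * eR C n β i)
    rw [h0.2.2, iota_Tt]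

end upR

/-- Freeness data for the right module `B φ(1)`. -/
structure Good {S B : Type} [Ring S] [Algebra k S] [Ring B] [Algebra k B] (φ : S →ₙₐ[k] B)
    (x : B) {m : ℕ} (v : Fin m → B) : Prop where
  inj : Function.Injective (asm v (nl φ) x)
  span : ∀ b, b * φ 1 ∈ LinearMap.range (asm v (nl φ) x)
  comm : ∀ s, φ s * x = x * φ s

lemma eR_eIdem (n : ℕ) (β : I → ℕ) (i : I) :
    eR C n β i * eIdem C (n + 1) (addA β i) = eR C n β i := by
  change eS C _ * eS C _ = eS C _
  rw [eS_mul_eS]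
  congr 1
  exact Finset.inter_eq_left.mpr (Finset.filter_subset _ _)

lemma evl_E (n : ℕ) (β : I → ℕ) (i : I) (p : Polynomial (Alg C n)) :
    evl (phiA C n i) (Xx C (Fin.last n)) (p * Polynomial.C (eIdem C n β)) =
      evl (phiA C n i) (Xx C (Fin.last n)) p * iota C n (eIdem C n β) := by
  induction p using Polynomial.induction_on' with
  | add p q hp hq => rw [add_mul, map_add, hp, hq, map_add, add_mul]
  | monomial m s =>
    have h1 : Commute (iota C n (eIdem C n β)) (Xx C (Fin.last n)) := iota_xlast C n _
    rw [Polynomial.monomial_mul_C, evl_monomial, evl_monomial, phiA_apply, phiA_apply, map_mul,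
      mul_assoc (iota C n s), iota_eps, mul_assoc, mul_assoc, mul_assoc, mul_assoc, (h1.pow_right m).eq]

lemma evl_eIdem (n : ℕ) (β : I → ℕ) (i : I) (p : Polynomial (Alg C n)) :
    evl (phiA C n i) (Xx C (Fin.last n)) (p * Polynomial.C (eIdem C n β)) *
      eIdem C (n + 1) (addA β i) =
      evl (phiA C n i) (Xx C (Fin.last n)) (p * Polynomial.C (eIdem C n β)) := by
  induction p using Polynomial.induction_on' with
  | add p q hp hq => rw [add_mul, map_add, add_mul, hp, hq]
  | monomial m s =>
    rw [Polynomial.monomial_mul_C, evl_monomial, phiA_apply, map_mul, mul_assoc (iota C n s), ← eR_eq,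
      mul_assoc, eIdem_central, ← mul_assoc, mul_assoc (iota C n s), eR_eIdem]

section upR
variable {C}
variable {n : ℕ} {β : I → ℕ} {i : I} {φ0 : bAlg C n β →ₙₐ[k] bAlg C (n + 1) (addA β i)}

lemma evl_map (h0 : IsUpRb C i φ0) (p : Polynomial (Alg C n)) :
    evl (nl φ0) (toB C (Xx C (Fin.last n))) (p.map (toB C (n := n) (β := β)).toRingHom) =
      toB C (evl (phiA C n i) (Xx C (Fin.last n)) (p * Polynomial.C (eIdem C n β))) := by
  induction p using Polynomial.induction_on' with
  | add p q hp hq => rw [Polynomial.map_add, map_add, hp, hq, add_mul, map_add, map_add]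
  | monomial m s =>
    rw [Polynomial.map_monomial, Polynomial.monomial_mul_C, evl_monomial, evl_monomial, phiA_apply,
      map_mul (iota C n), mul_assoc (iota C n s), ← eR_eq, map_mul, map_pow, ← upR_toB h0]
    rfl

lemma asm_map (h0 : IsUpRb C i φ0) (p : Fin (n + 1) → Polynomial (Alg C n)) :
    asm (fun a : Fin (n + 1) => toB C (vv C n a)) (nl φ0) (toB C (Xx C (Fin.last n)))
      (fun a => (p a).map (toB C (n := n) (β := β)).toRingHom) =
      toB C (asm (fun a : Fin (n + 1) => vv C n a) (phiA C n i) (Xx C (Fin.last n))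
        (fun a => p a * Polynomial.C (eIdem C n β))) := by
  rw [asm_apply, asm_apply, map_sum]
  refine Finset.sum_congr rfl fun a _ => ?_
  rw [evl_map h0, map_mul (toB C)]

lemma good_R (h0 : IsUpRb C i φ0) :
    Good φ0 (toB C (Xx C (Fin.last n))) (fun a : Fin (n + 1) => toB C (vv C n a)) := by
  constructor
  · rw [injective_iff_map_eq_zero]
    intro f hf
    have hs := Polynomial.map_surjective (toB C (n := n) (β := β)).toRingHom toB_surjective
    choose g hg using fun a => hs (f a)
    obtain rfl : (fun a => (g a).map (toB C (n := n) (β := β)).toRingHom) = f := funext hg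
    rw [asm_map h0] at hf
    have h1 := toB_ker C _ _ _ hf
    have h2 : asm (fun a : Fin (n + 1) => vv C n a) (phiA C n i) (Xx C (Fin.last n))
        (fun a => g a * Polynomial.C (eIdem C n β)) = 0 := by
      rw [← h1, asm_apply, Finset.sum_mul]
      refine Finset.sum_congr rfl fun a _ => ?_
      rw [mul_assoc, evl_eIdem]
    have h3 := (injective_iff_map_eq_zero _).mp (asm_inj C n i) _ h2
    funext a
    have h4 := congrArg (Polynomial.map (toB C (n := n) (β := β)).toRingHom) (congrFun h3 a)
    rw [Polynomial.map_mul, Polynomial.map_C] at h4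
    have h5 : (toB C (n := n) (β := β)).toRingHom (eIdem C n β) = 1 := toB_eIdem C n β
    rw [h5, map_one, mul_one] at h4
    rw [h4]
    simp
  · intro b
    obtain ⟨z, rfl⟩ := toB_surjective b
    obtain ⟨f, hf⟩ := span_eps C n i (z * iota C n (eIdem C n β))
    refine ⟨fun a => (f a).map (toB C (n := n) (β := β)).toRingHom, ?_⟩
    rw [asm_map h0, upR_one h0, ← map_mul]
    congr 1
    rw [mul_assoc, ← eR_eq] at hf
    rw [asm_apply] at hf ⊢
    simp only [evl_E, ← mul_assoc]
    rw [← Finset.sum_mul, hf, mul_assoc, ← iota_eR, eR_eq, ← mul_assoc (iota C n _), ← map_mul, eIdem_sq]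
  · intro s
    obtain ⟨s, rfl⟩ := toB_surjective s
    rw [upR_toB h0, ← map_mul, ← map_mul]
    congr 1
    rw [mul_assoc, ← mul_assoc (Xx C _), ← iota_xlast, mul_assoc]
    congr 1
    exact (X_eS C _ _).symm

end upR

end KLR


namespace KLR

variable {k : Type} [Field k] {I : Type} [Fintype I] [DecidableEq I] (C : CartanDatum k I)

/-! ### The flip -/

lemma Qel_symm' {A : Type} [Ring A] [Algebra k A] (i j : I) (u v : A) (huv : Commute u v) :
    Qel C i j u v = Qel C j i v u := by
  unfold Qel
  by_cases h : i = j
  · simp [h]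
  rw [if_neg h, if_neg (Ne.symm h), Finset.sum_comm]
  refine Finset.sum_congr rfl fun q _ => Finset.sum_congr rfl fun p _ => ?_
  rw [C.t_symm i j, C.symmetrize i j, add_comm, (huv.pow_pow p q).eq]

lemma Qdiff_symm {A : Type} [Ring A] [Algebra k A] (i j : I) (u v w : A) (huw : Commute u w) :
    Qdiff C i j u v w = Qdiff C i j w v u := by
  unfold Qdiff
  split_ifs with h
  · rfl
  refine Finset.sum_congr rfl fun p _ => Finset.sum_congr rfl fun q _ => ?_
  have : ∑ c ∈ Finset.range p, u ^ c * w ^ (p - 1 - c) = ∑ c ∈ Finset.range p, w ^ c * u ^ (p - 1 - c) := by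
    rw [← Finset.sum_range_reflect]
    refine Finset.sum_congr rfl fun c hc => ?_
    rw [Finset.mem_range] at hc
    rw [show p - 1 - (p - 1 - c) = c by omega, (huw.pow_pow _ _).eq]
  rw [this]

lemma ring_aux1 {A : Type} [Ring A] (y z w : A) : (-y - -z) * w = -((y - z) * w) := by
  noncomm_ring

lemma ring_aux2 {A : Type} [Ring A] (y z w : A) :
    (-y * -z * -y - -z * -y * -z) * w = (z * y * z - y * z * y) * w := by
  noncomm_ring

lemma ring_aux3 {A : Type} [Ring A] (y z : A) : -(-y * z) = y * z := by
  noncomm_ring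

lemma rev_swap (l m : ℕ) (a : Fin (l + m + 2)) :
    Fin.rev (sp l (by omega : l + 1 < l + m + 2) a) = sp m (by omega : m + 1 < l + m + 2) (Fin.rev a) := by
  have ha := a.isLt
  simp only [Equiv.swap_apply_def, Fin.ext_iff, Fin.val_rev]
  split_ifs <;> simp only [Fin.val_rev] <;> omega

lemma rev_mk (n l m : ℕ) (h : l + m + 1 = n) (hl : l < n) : Fin.rev (⟨l, hl⟩ : Fin n) = ⟨m, by omega⟩ := by
  simp only [Fin.ext_iff, Fin.val_rev]; omega

lemma flipRels (n : ℕ) : Rels C (n := n) (fun ν => Ee C (ν ∘ Fin.rev)) (fun a => Xx C (Fin.rev a))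
    (fun l _ => -tt C n (n - 2 - l)) := by
  have R := algRels C n
  have hneg : ∀ a b : Alg C n, -a * b = -(a * b) := fun a b => neg_mul a b
  have hneg2 : ∀ a b : Alg C n, a * -b = -(a * b) := fun a b => mul_neg a b
  have hnn : ∀ a : Alg C n, - -a = a := fun a => neg_neg a
  have hneg0 : -(0 : Alg C n) = 0 := neg_zero
  have hrr : ∀ ν : Fin n → I, (ν ∘ Fin.rev) ∘ Fin.rev = ν := fun ν => by funext a; simp
  constructor
  · intro ν ν'
    rw [R.ee]
    refine if_congr ⟨fun h => ?_, fun h => by rw [h]⟩ rfl rfl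
    rw [← hrr ν, h, hrr]
  · rw [← R.esum]
    exact Fintype.sum_equiv (Equiv.arrowCongr Fin.revPerm (Equiv.refl I)) _ _ fun ν => rfl
  · intro a b; exact R.xx _ _
  · intro a ν; exact R.xe _ _
  · intro l h ν
    obtain ⟨m, rfl⟩ : ∃ m, n = l + m + 2 := ⟨n - 2 - l, by omega⟩
    rw [show l + m + 2 - 2 - l = m by omega, tt_eq C (by omega : m + 1 < l + m + 2), hneg, hneg2, R.taue]
    congr 3
    funext a
    simp only [Function.comp_apply]
    congr 1
    have := rev_swap l m (Fin.rev a)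
    rw [Fin.rev_rev] at this
    rw [← this, Fin.rev_rev]
  · intro l h l' h' hh
    obtain ⟨m, hm⟩ : ∃ m, n = l + m + 2 := ⟨n - 2 - l, by omega⟩
    obtain ⟨m', hm'⟩ : ∃ m', n = l' + m' + 2 := ⟨n - 2 - l', by omega⟩
    rw [show n - 2 - l = m by omega, show n - 2 - l' = m' by omega,
      tt_eq C (by omega : m + 1 < n), tt_eq C (by omega : m' + 1 < n), hneg, hneg2, hneg, hneg2,
      R.tautau _ _ _ _ (by omega)]
  · intro l h ν
    obtain ⟨m, hm⟩ : ∃ m, n = l + m + 2 := ⟨n - 2 - l, by omega⟩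
    rw [show n - 2 - l = m by omega, tt_eq C (by omega : m + 1 < n), sq, hneg, hneg2, hnn, ← sq, R.tausq]
    simp only [Function.comp_apply]
    rw [rev_mk n m (l + 1) (by omega), rev_mk n (m + 1) l (by omega), rev_mk n l (m + 1) (by omega),
      rev_mk n (l + 1) m (by omega)]
    rw [Qel_symm' C _ _ _ _ (R.xx _ _)]
  · intro l h a ν
    obtain ⟨m, rfl⟩ : ∃ m, n = l + m + 2 := ⟨n - 2 - l, by omega⟩
    rw [show l + m + 2 - 2 - l = m by omega, tt_eq C (by omega : m + 1 < l + m + 2), hneg, hneg2]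
    have h1 := R.taux m (by omega) (Fin.rev a) (ν ∘ Fin.rev)
    rw [← rev_swap l m] at h1
    have h2 : ∀ y z w : Alg C (l + m + 2), (-y - -z) * w = -((y - z) * w) := fun y z w => ring_aux1 y z w
    rw [h2, h1]
    have e3 : (ν ∘ Fin.rev) ⟨m, by omega⟩ = ν ⟨l + 1, h⟩ := congrArg ν (rev_mk _ m (l + 1) (by omega) _)
    have e4 : (ν ∘ Fin.rev) ⟨m + 1, by omega⟩ = ν ⟨l, by omega⟩ := congrArg ν (rev_mk _ (m + 1) l (by omega) _)
    have e1 : Fin.rev a = ⟨m, by omega⟩ ↔ a = ⟨l + 1, h⟩ := by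
      simp only [Fin.ext_iff, Fin.val_rev]; omega
    have e2 : Fin.rev a = ⟨m + 1, by omega⟩ ↔ a = ⟨l, by omega⟩ := by
      simp only [Fin.ext_iff, Fin.val_rev]; omega
    simp only [e1, e2, e3, e4]
    by_cases h3 : ν ⟨l, by omega⟩ = ν ⟨l + 1, h⟩
    · simp only [h3, and_true]
      by_cases h4 : a = ⟨l + 1, h⟩
      · rw [if_pos h4, if_neg, if_pos h4, hnn]
        rw [h4]; simp
      · rw [if_neg h4, if_neg h4]
        split_ifs
        · rfl
        · exact hneg0
    · simp only [h3, Ne.symm h3, and_false, if_false]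
      exact hneg0
  · intro l h ν
    obtain ⟨m, hm⟩ : ∃ m, n = l + m + 3 := ⟨n - 3 - l, by omega⟩
    rw [show n - 2 - l = m + 1 by omega, show n - 2 - (l + 1) = m by omega,
      tt_eq C (by omega : m + 1 < n), tt_eq C (by omega : m + 1 + 1 < n)]
    have h1 := R.braid m (by omega) (ν ∘ Fin.rev)
    have h2 : ∀ y z w : Alg C n, (-y * -z * -y - -z * -y * -z) * w = (z * y * z - y * z * y) * w :=
      fun y z w => ring_aux2 y z w
    have e3 : (ν ∘ Fin.rev) ⟨m, by omega⟩ = ν ⟨l + 2, h⟩ := congrArg ν (rev_mk _ m (l + 2) (by omega) _)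
    have e4 : (ν ∘ Fin.rev) ⟨m + 1, by omega⟩ = ν ⟨l + 1, by omega⟩ :=
      congrArg ν (rev_mk _ (m + 1) (l + 1) (by omega) _)
    have e5 : (ν ∘ Fin.rev) ⟨m + 2, by omega⟩ = ν ⟨l, by omega⟩ := congrArg ν (rev_mk _ (m + 2) l (by omega) _)
    rw [h2, h1]
    simp only [e3, e4, e5]
    rw [rev_mk n l (m + 2) (by omega), rev_mk n (l + 1) (m + 1) (by omega), rev_mk n (l + 2) m (by omega)]
    rw [Qdiff_symm C _ _ _ _ _ (R.xx _ _)]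
    by_cases h3 : ν ⟨l, by omega⟩ = ν ⟨l + 2, h⟩
    · rw [if_pos h3, if_pos h3.symm, h3]
    · rw [if_neg h3, if_neg (Ne.symm h3)]

/-- The flip of `R(n)`. -/
noncomputable def flip (n : ℕ) : Alg C n →ₐ[k] Alg C n := algLift (flipRels C n)

lemma flip_Ee (n : ℕ) (ν) : flip C n (Ee C ν) = Ee C (ν ∘ Fin.rev) := algLift_Ee _ _
lemma flip_Xx (n : ℕ) (a) : flip C n (Xx C a) = Xx C (Fin.rev a) := algLift_Xx _ _
lemma flip_Tt {n l : ℕ} (m : ℕ) (h : l + m + 2 = n) (hl) :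
    flip C n (Tt C l hl) = -Tt C m (by omega) := by
  unfold flip
  rw [algLift_Tt, show n - 2 - l = m by omega, tt_eq C (by omega)]

lemma flip_flip (n : ℕ) (z : Alg C n) : flip C n (flip C n z) = z := by
  refine alg_hom_ext C (f := (flip C n).comp (flip C n)) (g := AlgHom.id k _) ?_ ?_ ?_ z
  · intro ν
    rw [AlgHom.comp_apply, flip_Ee, flip_Ee, AlgHom.id_apply]
    congr 1
    funext a; simp
  · intro a
    rw [AlgHom.comp_apply, flip_Xx, flip_Xx, Fin.rev_rev, AlgHom.id_apply]
  · intro l h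
    rw [AlgHom.comp_apply, flip_Tt C (n - 2 - l) (by omega), map_neg, flip_Tt C l (by omega), AlgHom.id_apply]
    exact neg_neg _

lemma flip_eS (n : ℕ) (s t : Finset (Fin n → I)) (hst : ∀ ν, ν ∘ Fin.rev ∈ t ↔ ν ∈ s) :
    flip C n (eS C s) = eS C t := by
  unfold eS
  rw [map_sum]
  refine Finset.sum_equiv (Equiv.arrowCongr Fin.revPerm (Equiv.refl I)) ?_ ?_
  · intro ν; exact (hst ν).symm
  · intro ν _; exact flip_Ee C n ν

lemma content_rev {n : ℕ} (ν : Fin n → I) : content (ν ∘ Fin.rev) = content ν :=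
  content_comp ν Fin.revPerm

/-- The flip of `R(β)`. -/
noncomputable def flipB (n : ℕ) (β : I → ℕ) : bAlg C n β →ₐ[k] bAlg C n β :=
  bLift (((algRels C n).map (flip C n)).map (toB C (β := β))) (by
    rw [← map_sum, ← map_sum]
    have := flip_eS C n (seqs β n) (seqs β n) (fun ν => by rw [mem_seqs, mem_seqs, content_rev])
    unfold eS at this
    rw [this]
    exact toB_eIdem C n β)

lemma flipB_toB (n : ℕ) (β : I → ℕ) (z : Alg C n) :
    flipB C n β (toB C z) = toB C (flip C n z) := by
  unfold flipB
  rw [bLift_toB]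
  exact algLift_map C ((toB C (β := β)).comp (flip C n)) z

lemma flipB_flipB (n : ℕ) (β : I → ℕ) (z : bAlg C n β) : flipB C n β (flipB C n β z) = z := by
  obtain ⟨z, rfl⟩ := toB_surjective z
  rw [flipB_toB, flipB_toB, flip_flip]

lemma flip_eL (n : ℕ) (β : I → ℕ) (i : I) : flip C (n + 1) (eL C n β i) = eR C n β i := by
  refine flip_eS C (n + 1) _ _ ?_
  intro ν
  rw [Finset.mem_filter, Finset.mem_filter, mem_seqs, mem_seqs, content_rev]
  simp

/-- Transport of freeness data. -/
lemma Good.transport {S B : Type} [Ring S] [Algebra k S] [Ring B] [Algebra k B]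
    {φ φ' : S →ₙₐ[k] B} {x : B} {m : ℕ} {v : Fin m → B} (H : Good φ x v)
    (F : B →ₐ[k] B) (G : S →ₐ[k] S) (hF : ∀ b, F (F b) = b) (hG : ∀ s, G (G s) = s)
    (hφ : ∀ s, φ' s = F (φ (G s))) : Good φ' (F x) (fun a => F (v a)) := by
  have h1 : ∀ p : Polynomial S, evl (nl φ') (F x) p = F (evl (nl φ) x (p.map G.toRingHom)) := by
    intro p
    induction p using Polynomial.induction_on' with
    | add p q hp hq => rw [map_add, hp, hq, Polynomial.map_add, map_add, map_add]
    | monomial m s =>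
      rw [Polynomial.map_monomial, evl_monomial, evl_monomial, map_mul, map_pow, nl_apply, hφ]
      rfl
  have h2 : ∀ f, asm (fun a => F (v a)) (nl φ') (F x) f =
      F (asm v (nl φ) x (fun a => (f a).map G.toRingHom)) := by
    intro f
    rw [asm_apply, asm_apply, map_sum]
    refine Finset.sum_congr rfl fun a _ => ?_
    rw [h1, map_mul F]
  have hGG : ∀ p : Polynomial S, (p.map G.toRingHom).map G.toRingHom = p := by
    intro p
    ext c
    rw [Polynomial.coeff_map, Polynomial.coeff_map]
    exact hG _
  constructor
  · intro f g hfg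
    rw [h2, h2] at hfg
    have h3 := congrArg F hfg
    rw [hF, hF] at h3
    have h4 := H.inj h3
    funext a
    rw [← hGG (f a), ← hGG (g a), congrFun h4 a]
  · intro b
    obtain ⟨f, hf⟩ := H.span (F b)
    refine ⟨fun a => (f a).map G.toRingHom, ?_⟩
    rw [h2]
    simp only [hGG]
    rw [hf, map_mul, hF, hφ, map_one G]
  · intro s
    rw [hφ, ← map_mul, H.comm, map_mul]

section upL
variable {C}
variable {n : ℕ} {β : I → ℕ} {i : I} {φ1 : bAlg C n β →ₙₐ[k] bAlg C (n + 1) (addA β i)}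

lemma good_L (h1 : IsUpLb C i φ1) : ∃ v : Fin (n + 1) → bAlg C (n + 1) (addA β i),
    Good φ1 (toB C (Xx C 0)) v ∧ φ1 1 = toB C (eL C n β i) := by
  let φ0 : bAlg C n β →ₙₐ[k] bAlg C (n + 1) (addA β i) :=
    ((flipB C (n + 1) (addA β i) : _ →ₐ[k] _) : bAlg C (n + 1) (addA β i) →ₙₐ[k] _).comp
      (φ1.comp ((flipB C n β : _ →ₐ[k] _) : bAlg C n β →ₙₐ[k] _))
  have hφ : ∀ s, φ0 s = flipB C (n + 1) (addA β i) (φ1 (flipB C n β s)) := fun s => rfl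
  have h0 : IsUpRb C i φ0 := by
    refine ⟨?_, ?_, ?_⟩
    · intro ν
      rw [hφ, flipB_toB, flip_Ee, h1.1, flipB_toB, flip_Ee]
      congr 2
      rw [Fin.cons_comp_rev]
      congr 1
      funext a; simp
    · intro a
      rw [hφ, flipB_toB, flip_Xx, h1.2.1, flipB_toB, map_mul, flip_eL, flip_Xx]
      congr 3
      simp [Fin.ext_iff]; omega
    · intro l h
      rw [hφ, flipB_toB, flip_Tt C (n - 2 - l) (by omega), map_neg, map_neg, h1.2.2, map_neg, flipB_toB,
        map_mul, flip_eL, flip_Tt C l (by omega), ← map_neg]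
      congr 1
      exact ring_aux3 _ _
  have hg := (good_R h0).transport (φ' := φ1) (flipB C (n + 1) (addA β i)) (flipB C n β)
    (flipB_flipB C _ _) (flipB_flipB C _ _) (fun s => by rw [hφ, flipB_flipB, flipB_flipB])
  rw [flipB_toB, flip_Xx, Fin.rev_last] at hg
  refine ⟨_, hg, ?_⟩
  have h2 := congrArg (flipB C (n + 1) (addA β i)) (hφ 1)
  rw [upR_one h0, map_one, flipB_flipB, flipB_toB, ← flip_eL, flip_flip] at h2
  exact h2.symm

end upL

end KLR


namespace KLR

open MulOpposite TensorProduct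

variable {k : Type} [Field k]

/-! ### The abstract freeness lemma -/

section abstract
variable {S B A : Type} [Ring S] [Algebra k S] [Ring B] [Algebra k B] [Ring A] [Algebra k A]
  [Module S A] [IsScalarTower k S A]

lemma evl_mul_C {φ : S →ₙₐ[k] B} {x : B} (hc : ∀ s, φ s * x = x * φ s) (p : Polynomial S) (r : S) :
    evl (nl φ) x (p * Polynomial.C r) = evl (nl φ) x p * φ r := by
  induction p using Polynomial.induction_on' with
  | add p q hp hq => rw [add_mul, map_add, hp, hq, map_add, add_mul]
  | monomial m s =>
    have h1 : Commute (φ r) (x ^ m) := Commute.pow_right (hc r) m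
    rw [Polynomial.monomial_mul_C, evl_monomial, evl_monomial, nl_apply, nl_apply, map_mul, mul_assoc,
      mul_assoc, h1.eq]

lemma evl_mul_X {φ : S →ₙₐ[k] B} {x : B} (p : Polynomial S) :
    evl (nl φ) x (p * Polynomial.X) = evl (nl φ) x p * x := by
  induction p using Polynomial.induction_on' with
  | add p q hp hq => rw [add_mul, map_add, hp, hq, map_add, add_mul]
  | monomial m s =>
    rw [Polynomial.monomial_mul_X, evl_monomial, evl_monomial, pow_succ, mul_assoc]

lemma Good.coef {φ : S →ₙₐ[k] B} {x : B} {m : ℕ} {v : Fin m → B} (H : Good φ x v) :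
    ∃ coef : B →ₗ[k] (Fin m → Polynomial S),
      (∀ b, asm v (nl φ) x (coef b) = b * φ 1) ∧
      (∀ b r, coef (b * φ r) = fun a => coef b a * Polynomial.C r) ∧
      (∀ b, coef (b * (x * φ 1)) = fun a => coef b a * Polynomial.X) ∧
      (∀ a c, coef (v a * x ^ c) = Pi.single a (Polynomial.monomial c 1)) := by
  obtain ⟨g, hg⟩ := LinearMap.exists_leftInverse_of_injective (asm v (nl φ) x)
    (LinearMap.ker_eq_bot.mpr H.inj)
  have hg' : ∀ f, g (asm v (nl φ) x f) = f := fun f => DFunLike.congr_fun hg f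
  have h1 : ∀ b, asm v (nl φ) x (g (b * φ 1)) = b * φ 1 := by
    intro b
    obtain ⟨f, hf⟩ := H.span b
    rw [← hf, hg']
  have h11 : φ 1 * φ 1 = φ 1 := by rw [← map_mul, one_mul]
  refine ⟨g.comp (LinearMap.mulRight k (φ 1)), ?_, ?_, ?_, ?_⟩
  · intro b; exact h1 b
  · intro b r
    change g (b * φ r * φ 1) = fun a => g (b * φ 1) a * _
    rw [← hg' (fun a => g (b * φ 1) a * Polynomial.C r)]
    congr 1
    rw [asm_apply]
    simp only [evl_mul_C H.comm, ← mul_assoc]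
    rw [← Finset.sum_mul, ← asm_apply, h1, mul_assoc, mul_assoc, ← map_mul, ← map_mul, one_mul, mul_one]
  · intro b
    change g (b * (x * φ 1) * φ 1) = fun a => g (b * φ 1) a * _
    rw [← hg' (fun a => g (b * φ 1) a * Polynomial.X)]
    congr 1
    rw [asm_apply]
    simp only [evl_mul_X, ← mul_assoc]
    rw [← Finset.sum_mul, ← asm_apply, h1, mul_assoc, mul_assoc, mul_assoc, h11, H.comm]
  · intro a c
    change g (v a * x ^ c * φ 1) = _
    rw [← hg' (Pi.single a (Polynomial.monomial c 1))]
    congr 1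
    have h2 : Commute (φ 1) (x ^ c) := Commute.pow_right (H.comm 1) c
    rw [asm_apply, Finset.sum_eq_single a]
    · rw [Pi.single_eq_same, evl_monomial, nl_apply, h2.eq, mul_assoc]
    · intro b _ hb
      rw [Pi.single_eq_of_ne hb, map_zero, mul_zero]
    · simp

lemma OT_bal (φ : S →ₙₐ[k] B) (b : B) (r : S) (m : A) :
    OTmk k S B A φ ((b * φ r) ⊗ₜ[k] m) = OTmk k S B A φ (b ⊗ₜ[k] (r • m)) := by
  unfold OTmk
  rw [Submodule.Quotient.eq]
  exact Submodule.subset_span ⟨b, r, m, rfl⟩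

lemma good_equiv (π : S →ₐ[k] A) (hπ : ∀ (r : S) (m : A), r • m = π r * m)
    {φ : S →ₙₐ[k] B} {x : B} {m : ℕ} {v : Fin m → B} (H : Good φ x v) :
    ∃ Ψ : OT k S B A φ ≃+ (Fin m → Polynomial A),
      (∀ b s r, Ψ (OTmk k S B A φ (b ⊗ₜ[k] (s * r))) =
        fun a => Ψ (OTmk k S B A φ (b ⊗ₜ[k] s)) a * Polynomial.C r) ∧
      (∀ b s, Ψ (OTmk k S B A φ ((b * (x * φ 1)) ⊗ₜ[k] s)) =
        fun a => Ψ (OTmk k S B A φ (b ⊗ₜ[k] s)) a * Polynomial.X) := by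
  obtain ⟨coef, c1, c2, c3, c4⟩ := H.coef
  let F0 : B →ₗ[k] A →ₗ[k] (Fin m → Polynomial A) :=
    LinearMap.mk₂ k (fun b s => fun a => (coef b a).map π.toRingHom * Polynomial.C s)
      (by intro b b' s; funext a; simp [add_mul])
      (by
        intro c b s; funext a
        simp only [map_smul, Pi.smul_apply]
        rw [← smul_mul_assoc]
        congr 1
        ext d
        simp [Polynomial.coeff_map, Polynomial.coeff_smul])
      (by intro b s s'; funext a; simp [mul_add])
      (by
        intro c b s; funext a
        simp only [Pi.smul_apply]
        rw [← mul_smul_comm, Polynomial.smul_C])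
  let F : B ⊗[k] A →ₗ[k] (Fin m → Polynomial A) := TensorProduct.lift F0
  have hF : ∀ b s, F (b ⊗ₜ[k] s) = fun a => (coef b a).map π.toRingHom * Polynomial.C s :=
    fun b s => rfl
  have hker : (TRel k S B A φ).restrictScalars k ≤ LinearMap.ker F := by
    intro z hz
    have hz' : z ∈ TRel k S B A φ := hz
    have key : ∀ b' : B, F (b' • z) = 0 := by
      clear hz
      unfold TRel at hz'
      induction hz' using Submodule.span_induction with
      | mem z h =>
        obtain ⟨b, r, s, rfl⟩ := h
        intro b'
        rw [smul_sub, TensorProduct.smul_tmul', TensorProduct.smul_tmul', map_sub, hF, hF, smul_eq_mul,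
          smul_eq_mul, ← mul_assoc, c2, hπ, sub_eq_zero]
        funext a
        rw [Polynomial.map_mul, Polynomial.map_C, Polynomial.C_mul, mul_assoc]
        rfl
      | zero => intro b'; rw [smul_zero, map_zero]
      | add y z _ _ hy hz => intro b'; rw [smul_add, map_add, hy, hz, add_zero]
      | smul b z _ hz => intro b'; rw [smul_smul]; exact hz _
    rw [LinearMap.mem_ker, ← one_smul B z]
    exact key 1
  let Q : OT k S B A φ →ₗ[k] (Fin m → Polynomial A) :=
    (((TRel k S B A φ).restrictScalars k).liftQ F hker).comp
      (Submodule.Quotient.restrictScalarsEquiv k (TRel k S B A φ)).symm.toLinearMap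
  have hQ : ∀ z, Q (OTmk k S B A φ z) = F z := fun z => rfl
  let mkk : B ⊗[k] A →ₗ[k] OT k S B A φ := (TRel k S B A φ).mkQ.restrictScalars k
  have hmkk : ∀ z, mkk z = OTmk k S B A φ z := fun z => rfl
  let P1 : Fin m → Polynomial A →ₗ[k] OT k S B A φ := fun a =>
    Polynomial.lsum fun c => mkk.comp (TensorProduct.mk k B A (v a * x ^ c))
  have hP1 : ∀ a c s, P1 a (Polynomial.monomial c s) = OTmk k S B A φ ((v a * x ^ c) ⊗ₜ[k] s) := by
    intro a c s
    change Polynomial.lsum _ _ = _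
    rw [Polynomial.lsum_apply, Polynomial.sum_monomial_index]
    · rfl
    · simp
  let P : (Fin m → Polynomial A) →ₗ[k] OT k S B A φ := ∑ a, (P1 a).comp (LinearMap.proj a)
  have hP : ∀ f, P f = ∑ a, P1 a (f a) := by intro f; simp [P]
  have hP2 : ∀ a (p : Polynomial S) (s : A), P1 a (p.map π.toRingHom * Polynomial.C s) =
      mkk ((v a * evl (nl φ) x p) ⊗ₜ[k] s) := by
    intro a p s
    induction p using Polynomial.induction_on' with
    | add p q hp hq =>
      rw [Polynomial.map_add, add_mul, map_add, hp, hq, map_add, mul_add, TensorProduct.add_tmul, map_add]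
    | monomial c r =>
      have h1 : Commute (φ r) (x ^ c) := Commute.pow_right (H.comm r) c
      rw [Polynomial.map_monomial, Polynomial.monomial_mul_C, hP1, evl_monomial, nl_apply, h1.eq,
        ← mul_assoc, hmkk, OT_bal, hπ]
      rfl
  have hPQ : ∀ y, P (Q y) = y := by
    intro y
    obtain ⟨z, rfl⟩ := Submodule.Quotient.mk_surjective _ y
    change P (Q (mkk z)) = mkk z
    induction z using TensorProduct.induction_on with
    | zero => simp only [map_zero]
    | add y z hy hz => simp only [map_add, hy, hz]
    | tmul b s =>
      rw [hmkk, hQ, hF, hP]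
      simp only [hP2]
      rw [← map_sum, ← TensorProduct.sum_tmul, ← asm_apply, c1, hmkk, OT_bal, hπ, map_one, one_mul]
  have hQP1 : ∀ a (p : Polynomial A), Q (P1 a p) = Pi.single a p := by
    intro a p
    induction p using Polynomial.induction_on' with
    | add p q hp hq => rw [map_add, map_add, hp, hq, Pi.single_add]
    | monomial c s =>
      rw [hP1, hQ, hF, c4]
      funext b
      by_cases hb : b = a
      · subst hb
        rw [Pi.single_eq_same, Pi.single_eq_same, Polynomial.map_monomial, Polynomial.monomial_mul_C,
          map_one, one_mul]
      · rw [Pi.single_eq_of_ne hb, Pi.single_eq_of_ne hb, Polynomial.map_zero, zero_mul]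
  have hQP : ∀ f, Q (P f) = f := by
    intro f
    rw [hP, map_sum]
    simp only [hQP1]
    exact Finset.univ_sum_single f
  refine ⟨{ toFun := Q, invFun := P, left_inv := hPQ, right_inv := hQP, map_add' := map_add Q }, ?_, ?_⟩
  · intro b s r
    change Q (OTmk k S B A φ (b ⊗ₜ[k] (s * r))) =
      fun a => Q (OTmk k S B A φ (b ⊗ₜ[k] s)) a * Polynomial.C r
    rw [hQ, hQ, hF, hF]
    funext a
    rw [Polynomial.C_mul, mul_assoc]
  · intro b s
    change Q (OTmk k S B A φ ((b * (x * φ 1)) ⊗ₜ[k] s)) =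
      fun a => Q (OTmk k S B A φ (b ⊗ₜ[k] s)) a * Polynomial.X
    rw [hQ, hQ, hF, hF, c3]
    funext a
    rw [Polynomial.map_mul, Polynomial.map_X, mul_assoc, mul_assoc, Polynomial.X_mul_C]

lemma good_module (π : S →ₐ[k] A) (hπ : ∀ (r : S) (m : A), r • m = π r * m)
    {φ : S →ₙₐ[k] B} {x y : B} {m : ℕ} {v : Fin m → B} (H : Good φ x v) (hy : y = x * φ 1) :
    ∃ inst : Module (A ⊗[k] Polynomial k)ᵐᵒᵖ (OT k S B A φ),
      letI := inst
      (∀ (r : A) (b : B) (m : A),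
          op (r ⊗ₜ[k] (1 : Polynomial k)) • OTmk k S B A φ (b ⊗ₜ[k] m)
            = OTmk k S B A φ (b ⊗ₜ[k] (m * r))) ∧
      (∀ (b : B) (m : A),
          op ((1 : A) ⊗ₜ[k] (Polynomial.X : Polynomial k)) • OTmk k S B A φ (b ⊗ₜ[k] m)
            = OTmk k S B A φ ((b * y) ⊗ₜ[k] m)) ∧
      Module.Finite (A ⊗[k] Polynomial k)ᵐᵒᵖ (OT k S B A φ) ∧
      Module.Projective (A ⊗[k] Polynomial k)ᵐᵒᵖ (OT k S B A φ) := by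
  obtain ⟨Ψ, h1, h2⟩ := good_equiv π hπ H
  let E := polyEquivTensor k A
  let Ω : OT k S B A φ ≃+ (Fin m → (A ⊗[k] Polynomial k)ᵐᵒᵖ) :=
    Ψ.trans (AddEquiv.piCongrRight fun _ => E.toAddEquiv.trans opAddEquiv)
  have hΩ : ∀ y a, Ω y a = op (E (Ψ y a)) := fun y a => rfl
  let inst : Module (A ⊗[k] Polynomial k)ᵐᵒᵖ (OT k S B A φ) := Ω.module _
  have hs : ∀ (t : (A ⊗[k] Polynomial k)ᵐᵒᵖ) (z : OT k S B A φ), t • z = Ω.symm (t • Ω z) := fun t z => rfl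
  have hsm : ∀ (t : (A ⊗[k] Polynomial k)ᵐᵒᵖ) (z : OT k S B A φ), Ω (t • z) = t • Ω z := by
    intro t z
    rw [hs, AddEquiv.apply_symm_apply]
  let L : OT k S B A φ ≃ₗ[(A ⊗[k] Polynomial k)ᵐᵒᵖ] (Fin m → (A ⊗[k] Polynomial k)ᵐᵒᵖ) :=
    { Ω with map_smul' := hsm }
  refine ⟨inst, ?_, ?_, ?_, ?_⟩
  · intro r b s
    rw [hs, AddEquiv.symm_apply_eq]
    funext a
    rw [Pi.smul_apply, hΩ, hΩ, h1, map_mul, op_mul, smul_eq_mul]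
    congr 2
    simp [E, polyEquivTensor_apply]
  · intro b s
    rw [hs, AddEquiv.symm_apply_eq, hy]
    funext a
    rw [Pi.smul_apply, hΩ, hΩ, h2, map_mul, op_mul, smul_eq_mul]
    congr 2
    simp [E, polyEquivTensor_apply]
  · exact Module.Finite.equiv L.symm
  · exact Module.Projective.of_equiv L.symm

end abstract

end KLR

open KLR MulOpposite TensorProduct in
set_option maxHeartbeats 1000000 in
/-- `K₀ = R(β+α_i)e(β,α_i) ⊗_{R(β)} R^Λ(β)` and `K₁ = R(β+α_i)e(α_i,β) ⊗_{R(β)} R^Λ(β)`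
are finitely generated projective right modules over `R^Λ(β) ⊗_k k[t_i]`, where `t_i`
acts by right multiplication by `x_{n+1}e(β,α_i)` on `K₀` and by `x_1 e(α_i,β)` on `K₁`. -/
theorem K0_K1_projective {k : Type} [Field k] {I : Type} [Fintype I]
    [DecidableEq I] (C : CartanDatum k I) (Λ : I → ℕ) (β : I → ℕ) (i : I) (n : ℕ)
    (hn : ht I β = n)
    (φ0 : bAlg C n β →ₙₐ[k] bAlg C (n + 1) (addA β i)) (hφ0 : IsUpRb C i φ0)
    (φ1 : bAlg C n β →ₙₐ[k] bAlg C (n + 1) (addA β i)) (hφ1 : IsUpLb C i φ1) :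
    (∃ inst : Module (cAlg C Λ n β ⊗[k] Polynomial k)ᵐᵒᵖ
        (OT k (bAlg C n β) (bAlg C (n + 1) (addA β i)) (cAlg C Λ n β) φ0),
      letI := inst
      (∀ (r : cAlg C Λ n β) (b : bAlg C (n + 1) (addA β i)) (m : cAlg C Λ n β),
          op (r ⊗ₜ[k] (1 : Polynomial k)) •
            OTmk k (bAlg C n β) (bAlg C (n + 1) (addA β i)) (cAlg C Λ n β) φ0 (b ⊗ₜ[k] m)
            = OTmk k (bAlg C n β) (bAlg C (n + 1) (addA β i)) (cAlg C Λ n β) φ0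
                (b ⊗ₜ[k] (m * r))) ∧
      (∀ (b : bAlg C (n + 1) (addA β i)) (m : cAlg C Λ n β),
          op ((1 : cAlg C Λ n β) ⊗ₜ[k] (Polynomial.X : Polynomial k)) •
            OTmk k (bAlg C n β) (bAlg C (n + 1) (addA β i)) (cAlg C Λ n β) φ0 (b ⊗ₜ[k] m)
            = OTmk k (bAlg C n β) (bAlg C (n + 1) (addA β i)) (cAlg C Λ n β) φ0
                ((b * toB C (Xx C (Fin.last n) * eR C n β i)) ⊗ₜ[k] m)) ∧
      Module.Finite (cAlg C Λ n β ⊗[k] Polynomial k)ᵐᵒᵖ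
        (OT k (bAlg C n β) (bAlg C (n + 1) (addA β i)) (cAlg C Λ n β) φ0) ∧
      Module.Projective (cAlg C Λ n β ⊗[k] Polynomial k)ᵐᵒᵖ
        (OT k (bAlg C n β) (bAlg C (n + 1) (addA β i)) (cAlg C Λ n β) φ0)) ∧
    (∃ inst : Module (cAlg C Λ n β ⊗[k] Polynomial k)ᵐᵒᵖ
        (OT k (bAlg C n β) (bAlg C (n + 1) (addA β i)) (cAlg C Λ n β) φ1),
      letI := inst
      (∀ (r : cAlg C Λ n β) (b : bAlg C (n + 1) (addA β i)) (m : cAlg C Λ n β),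
          op (r ⊗ₜ[k] (1 : Polynomial k)) •
            OTmk k (bAlg C n β) (bAlg C (n + 1) (addA β i)) (cAlg C Λ n β) φ1 (b ⊗ₜ[k] m)
            = OTmk k (bAlg C n β) (bAlg C (n + 1) (addA β i)) (cAlg C Λ n β) φ1
                (b ⊗ₜ[k] (m * r))) ∧
      (∀ (b : bAlg C (n + 1) (addA β i)) (m : cAlg C Λ n β),
          op ((1 : cAlg C Λ n β) ⊗ₜ[k] (Polynomial.X : Polynomial k)) •
            OTmk k (bAlg C n β) (bAlg C (n + 1) (addA β i)) (cAlg C Λ n β) φ1 (b ⊗ₜ[k] m)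
            = OTmk k (bAlg C n β) (bAlg C (n + 1) (addA β i)) (cAlg C Λ n β) φ1
                ((b * toB C (Xx C 0 * eL C n β i)) ⊗ₜ[k] m)) ∧
      Module.Finite (cAlg C Λ n β ⊗[k] Polynomial k)ᵐᵒᵖ
        (OT k (bAlg C n β) (bAlg C (n + 1) (addA β i)) (cAlg C Λ n β) φ1) ∧
      Module.Projective (cAlg C Λ n β ⊗[k] Polynomial k)ᵐᵒᵖ
        (OT k (bAlg C n β) (bAlg C (n + 1) (addA β i)) (cAlg C Λ n β) φ1)) := by
  refine ⟨?_, ?_⟩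
  · exact good_module (toC C) (fun r m => rfl) (good_R hφ0) (by rw [upR_one hφ0, ← map_mul])
  · obtain ⟨v, hv, h1⟩ := good_L hφ1
    exact good_module (toC C) (fun r m => rfl) hv (by rw [h1, ← map_mul])
end
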